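/- arXiv:1210.6007 — 2 statements merged into one kernel-verified Lean document; each statement's English description precedes it below -/
import Mathlib

section
/- Let u satisfy the a priori estimate assumption on Ω̂ ⊂ ℝ^{n+1} × [0,∞), and set v := √(1+|Du|²). Then at every point (x,t) ∈ Ω̂ with u(x,t) < 0 one has v(x,t)·u(x,t)² ≤ sup { v(y,0)·u(y,0)² : y with (y,0) ∈ Ω̂ and u(y,0) < 0 }. -/
open Set Filter Topology Metric

noncomputable section

/-- Divergence of a vector field on Euclidean space. -/
def vecDiv {m : ℕ} (X : EuclideanSpace ℝ (Fin m) → EuclideanSpace ℝ (Fin m))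
    (x : EuclideanSpace ℝ (Fin m)) : ℝ :=
  ∑ i, fderiv ℝ X x (EuclideanSpace.single i 1) i

/-- Spatial gradient of a time-dependent function. -/
def spatialGrad {m : ℕ} (u : EuclideanSpace ℝ (Fin m) × ℝ → ℝ)
    (x : EuclideanSpace ℝ (Fin m)) (t : ℝ) : EuclideanSpace ℝ (Fin m) :=
  gradient (fun y => u (y, t)) x

/-- The gradient function `v = √(1+|Du|²)` of the graph of `u(·,t)`. -/
def gradFn {m : ℕ} (u : EuclideanSpace ℝ (Fin m) × ℝ → ℝ)
    (x : EuclideanSpace ℝ (Fin m)) (t : ℝ) : ℝ :=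
  Real.sqrt (1 + ‖spatialGrad u x t‖ ^ 2)

/-- Graphical mean curvature flow equation
`∂u/∂t = √(1+|Du|²) · div(Du/√(1+|Du|²))` at the point `(x,t)`. -/
def mcfEqAt {m : ℕ} (u : EuclideanSpace ℝ (Fin m) × ℝ → ℝ)
    (x : EuclideanSpace ℝ (Fin m)) (t : ℝ) : Prop :=
  deriv (fun s => u (x, s)) t
    = gradFn u x t * vecDiv (fun y => (gradFn u y t)⁻¹ • spatialGrad u y t) x

/-!
Fix `p` and let `ξ = Du(p)`. By Cauchy–Schwarz, `φ = (1 + ⟨ξ, Du⟩) u²` satisfies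
`φ ≤ √(1 + |ξ|²) v u²`, with equality at `p`. A backward-in-time maximum of `v u² - εt` at `p` is
thus inherited by `φ - √(1 + |ξ|²) εt`, and `v` itself is never differentiated.
Differentiating the flow along `ξ` and completing a square shows that `φ` is, at `p`, a subsolution
of the parabolic operator with coefficients frozen at `ξ`, which rules such a maximum out. The weak
maximum principle on `{u < 0}`, on whose relative boundary `v u²` vanishes, then gives the bound.
-/

section Calculus

variable {X : Type*} [NormedAddCommGroup X] [NormedSpace ℝ X] {f g : X → ℝ} {p : X}

theorem deriv_deriv_nonpos_of_isLocalMax {f : ℝ → ℝ} {x : ℝ} (hf : ContinuousAt f x)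
    (hmax : IsLocalMax f x) : deriv (deriv f) x ≤ 0 := by
  by_contra! hpos
  have hmin : IsLocalMin f x := isLocalMin_of_deriv_deriv_pos hpos hmax.deriv_eq_zero hf
  have hconst : f =ᶠ[𝓝 x] fun _ => f x := by
    filter_upwards [hmax, hmin] with y hle hge using le_antisymm hle hge
  rw [hconst.deriv.deriv_eq, deriv_const', deriv_const] at hpos
  exact hpos.false

theorem hasDerivAt_comp_add_smul {q d : X} {s : ℝ} (hq : q = p + s • d)
    (hf : DifferentiableAt ℝ f q) :
    HasDerivAt (fun s : ℝ => f (p + s • d)) (fderiv ℝ f q d) s := by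
  subst hq
  exact hf.hasFDerivAt.comp_hasDerivAt s
    (by simpa using ((hasDerivAt_id s).smul_const d).const_add p)

theorem tendsto_add_smul_nhds_zero (p d : X) : Tendsto (fun s : ℝ => p + s • d) (𝓝 0) (𝓝 p) :=
  Continuous.tendsto' (by fun_prop) _ _ (by simp)

theorem differentiableAt_fderiv_of_contDiffAt {Y : Type*} [NormedAddCommGroup Y] [NormedSpace ℝ Y]
    {f : X → Y} (hf : ContDiffAt ℝ 2 f p) : DifferentiableAt ℝ (fderiv ℝ f) p :=
  (hf.fderiv_right (m := 1) (by norm_num)).differentiableAt one_ne_zero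

theorem fderiv_fderiv_apply_const (hf : ContDiffAt ℝ 2 f p) (a d : X) :
    fderiv ℝ (fun q => fderiv ℝ f q d) p a = fderiv ℝ (fderiv ℝ f) p a d := by
  simp [fderiv_clm_apply (differentiableAt_fderiv_of_contDiffAt hf) (differentiableAt_const d)]

theorem fderiv_fderiv_apply_comm (hf : ContDiffAt ℝ 2 f p) (a b : X) :
    fderiv ℝ (fderiv ℝ f) p a b = fderiv ℝ (fderiv ℝ f) p b a :=
  hf.isSymmSndFDerivAt (by simp) a b

theorem fderiv_fderiv_fderiv_apply_const (hf : ContDiffAt ℝ 3 f p) (a d : X) :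
    fderiv ℝ (fderiv ℝ fun q => fderiv ℝ f q d) p a a =
      fderiv ℝ (fderiv ℝ (fderiv ℝ f)) p d a a := by
  have hD : DifferentiableAt ℝ (fderiv ℝ (fderiv ℝ f)) p :=
    differentiableAt_fderiv_of_contDiffAt (hf.fderiv_right (by norm_num))
  have hfd (d : X) : ContDiffAt ℝ 2 (fun q => fderiv ℝ f q d) p :=
    (hf.fderiv_right (by norm_num)).clm_apply contDiffAt_const
  have hf2 : ∀ᶠ q in 𝓝 p, ContDiffAt ℝ 2 f q :=
    (hf.of_le (by norm_num)).eventually (by simp)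
  have hda : (fun q => fderiv ℝ (fun q => fderiv ℝ f q d) q a) =ᶠ[𝓝 p]
      fun q => fderiv ℝ (fun q => fderiv ℝ f q a) q d := by
    filter_upwards [hf2] with q hq
    rw [fderiv_fderiv_apply_const hq, fderiv_fderiv_apply_const hq, fderiv_fderiv_apply_comm hq]
  have haa : (fun q => fderiv ℝ (fun q => fderiv ℝ f q a) q a) =ᶠ[𝓝 p]
      fun q => fderiv ℝ (fderiv ℝ f) q a a := by
    filter_upwards [hf2] with q hq using fderiv_fderiv_apply_const hq a a
  rw [← fderiv_fderiv_apply_const (hfd d), hda.fderiv_eq, fderiv_fderiv_apply_const (hfd a),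
    fderiv_fderiv_apply_comm (hfd a), ← fderiv_fderiv_apply_const (hfd a), haa.fderiv_eq,
    fderiv_clm_apply (hD.clm_apply (differentiableAt_const a)) (differentiableAt_const a),
    fderiv_clm_apply hD (differentiableAt_const a)]
  simp

theorem fderiv_fderiv_mul_apply_self (hf : ContDiffAt ℝ 2 f p) (hg : ContDiffAt ℝ 2 g p) (a : X) :
    fderiv ℝ (fderiv ℝ fun q => f q * g q) p a a =
      f p * fderiv ℝ (fderiv ℝ g) p a a + 2 * (fderiv ℝ f p a * fderiv ℝ g p a)
        + g p * fderiv ℝ (fderiv ℝ f) p a a := by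
  have hmul : fderiv ℝ (fun q => f q * g q) =ᶠ[𝓝 p]
      fun q => f q • fderiv ℝ g q + g q • fderiv ℝ f q := by
    filter_upwards [hf.eventually (by simp), hg.eventually (by simp)] with q hfq hgq
    exact fderiv_fun_mul (hfq.differentiableAt two_ne_zero) (hgq.differentiableAt two_ne_zero)
  have hf1 := (hf.differentiableAt two_ne_zero).hasFDerivAt
  have hg1 := (hg.differentiableAt two_ne_zero).hasFDerivAt
  rw [hmul.fderiv_eq, ((hf1.fun_smul (differentiableAt_fderiv_of_contDiffAt hg).hasFDerivAt).fun_add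
    (hg1.fun_smul (differentiableAt_fderiv_of_contDiffAt hf).hasFDerivAt)).fderiv]
  simp only [add_apply, smul_apply, ContinuousLinearMap.smulRight_apply, smul_eq_mul]
  ring

theorem fderiv_fderiv_apply_self_nonpos (hf : ContDiffAt ℝ 2 f p) {d : X}
    (hmax : ∀ᶠ s : ℝ in 𝓝 0, f (p + s • d) ≤ f p) : fderiv ℝ (fderiv ℝ f) p d d ≤ 0 := by
  have hderiv : deriv (fun s : ℝ => f (p + s • d)) =ᶠ[𝓝 0] fun s => fderiv ℝ f (p + s • d) d := by
    filter_upwards [(tendsto_add_smul_nhds_zero p d).eventually (hf.eventually (by simp))]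
      with s hs
    exact (hasDerivAt_comp_add_smul rfl (hs.differentiableAt two_ne_zero)).deriv
  have hderiv2 : deriv (deriv fun s : ℝ => f (p + s • d)) 0 = fderiv ℝ (fderiv ℝ f) p d d := by
    rw [hderiv.deriv_eq, ← fderiv_fderiv_apply_const hf]
    exact (hasDerivAt_comp_add_smul (by simp)
      ((differentiableAt_fderiv_of_contDiffAt hf).clm_apply (differentiableAt_const d))).deriv
  rw [← hderiv2]
  refine deriv_deriv_nonpos_of_isLocalMax ?_ (by simpa [IsLocalMax, IsMaxFilter] using hmax)
  exact (hasDerivAt_comp_add_smul (by simp) (hf.differentiableAt two_ne_zero)).continuousAt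

theorem le_fderiv_of_eventually_le_left (hf : DifferentiableAt ℝ f p) {d : X} {c : ℝ}
    (hle : ∀ᶠ s : ℝ in 𝓝[<] 0, f (p + s • d) ≤ f p + c * s) : c ≤ fderiv ℝ f p d := by
  have hslope := (hasDerivAt_comp_add_smul (p := p) (d := d) (s := 0) (by simp) hf).tendsto_slope
  have hleft : 𝓝[<] (0 : ℝ) ≤ 𝓝[≠] 0 := nhdsWithin_mono _ fun s hs => ne_of_lt hs
  refine ge_of_tendsto (hslope.mono_left hleft) ?_
  filter_upwards [hle, self_mem_nhdsWithin] with s hs hneg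
  rw [slope_def_field, le_div_iff_of_neg (by simpa using hneg)]
  simp only [zero_smul, add_zero, sub_zero]
  linarith

end Calculus

section InnerProductSpace

variable {E : Type*} [NormedAddCommGroup E] [InnerProductSpace ℝ E]

theorem one_add_inner_le_sqrt_mul_sqrt (a b : E) :
    1 + inner ℝ a b ≤ √(1 + ‖a‖ ^ 2) * √(1 + ‖b‖ ^ 2) := by
  rw [← Real.sqrt_mul (by positivity)]
  refine Real.le_sqrt_of_sq_le ?_
  have hcs : inner ℝ a b ^ 2 ≤ ‖a‖ ^ 2 * ‖b‖ ^ 2 := by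
    rw [← mul_pow]
    exact sq_le_sq' (neg_le_of_abs_le (abs_real_inner_le_norm a b)) (real_inner_le_norm a b)
  nlinarith [sq_nonneg ‖a - b‖, norm_sub_sq_real a b]

theorem norm_sq_mul_sum_le_of_nonpos {ι : Type*} [Fintype ι] (b : OrthonormalBasis ι ℝ E)
    {B : E →L[ℝ] E →L[ℝ] ℝ} (hB : ∀ w, B w w ≤ 0) (ξ : E) :
    ‖ξ‖ ^ 2 * ∑ i, B (b i) (b i) ≤ B ξ ξ := by
  rcases eq_or_ne ξ 0 with rfl | hξ
  · simp
  -- `‖ξ‖² bᵢ - ⟨bᵢ, ξ⟩ ξ` is `‖ξ‖²` times the projection of `bᵢ` to `ξᗮ`: this compares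
  -- the trace of `B` on `ξᗮ` with `0`.
  have hexpand (i : ι) :
      B (‖ξ‖ ^ 2 • b i - inner ℝ (b i) ξ • ξ) (‖ξ‖ ^ 2 • b i - inner ℝ (b i) ξ • ξ) =
        ‖ξ‖ ^ 2 * (‖ξ‖ ^ 2 * B (b i) (b i)) - ‖ξ‖ ^ 2 * B (inner ℝ (b i) ξ • b i) ξ
          - ‖ξ‖ ^ 2 * B ξ (inner ℝ (b i) ξ • b i) + inner ℝ (b i) ξ ^ 2 * B ξ ξ := by
    simp only [map_sub, map_smul, sub_apply, smul_apply, smul_eq_mul]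
    ring
  have hsum := Finset.sum_nonpos fun i (_ : i ∈ Finset.univ) =>
    hB (‖ξ‖ ^ 2 • b i - inner ℝ (b i) ξ • ξ)
  simp only [hexpand, Finset.sum_add_distrib, Finset.sum_sub_distrib, ← Finset.mul_sum,
    ← Finset.sum_mul, ← map_sum, ← sum_apply, b.sum_repr', b.sum_sq_inner_right] at hsum
  have hξ : 0 < ‖ξ‖ ^ 2 := by positivity
  nlinarith

end InnerProductSpace

section Divergence

variable {m : ℕ} {x : EuclideanSpace ℝ (Fin m)}

theorem vecDiv_smul {g : EuclideanSpace ℝ (Fin m) → ℝ}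
    {Y : EuclideanSpace ℝ (Fin m) → EuclideanSpace ℝ (Fin m)}
    (hg : DifferentiableAt ℝ g x) (hY : DifferentiableAt ℝ Y x) :
    vecDiv (fun y => g y • Y y) x = g x * vecDiv Y x + fderiv ℝ g x (Y x) := by
  have hYx : fderiv ℝ g x (Y x) = ∑ i, fderiv ℝ g x (EuclideanSpace.single i 1) * Y x i := by
    conv_lhs => rw [← (EuclideanSpace.basisFun (Fin m) ℝ).sum_repr (Y x), map_sum]
    simp [mul_comm]
  simp [vecDiv, fderiv_fun_smul hg hY, hYx, Finset.sum_add_distrib, Finset.mul_sum]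

theorem one_add_normSq_mul_vecDiv_normalize
    {Y : EuclideanSpace ℝ (Fin m) → EuclideanSpace ℝ (Fin m)} (hY : DifferentiableAt ℝ Y x) :
    (1 + ‖Y x‖ ^ 2) * (√(1 + ‖Y x‖ ^ 2) * vecDiv (fun y => (√(1 + ‖Y y‖ ^ 2))⁻¹ • Y y) x) =
      (1 + ‖Y x‖ ^ 2) * vecDiv Y x - inner ℝ (Y x) (fderiv ℝ Y x (Y x)) := by
  have hpos : 0 < 1 + ‖Y x‖ ^ 2 := by positivity
  have hsqrt : √(1 + ‖Y x‖ ^ 2) ^ 2 = 1 + ‖Y x‖ ^ 2 := Real.sq_sqrt hpos.le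
  have hv : HasFDerivAt (fun y => (√(1 + ‖Y y‖ ^ 2))⁻¹) _ x :=
    (hasDerivAt_inv (Real.sqrt_pos.2 hpos).ne').comp_hasFDerivAt x
      ((hY.hasFDerivAt.norm_sq.const_add 1).sqrt hpos.ne')
  rw [vecDiv_smul hv.differentiableAt hY, hv.fderiv]
  simp only [one_div, mul_inv_rev, neg_smul, neg_apply, smul_apply,
    ContinuousLinearMap.comp_apply, coe_innerSL_apply, nsmul_eq_mul, Nat.cast_ofNat, smul_eq_mul]
  field_simp
  rw [hsqrt]
  ring

end Divergence

section Spacetime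

variable {m : ℕ} {u f g : EuclideanSpace ℝ (Fin m) × ℝ → ℝ} {p : EuclideanSpace ℝ (Fin m) × ℝ}

theorem inner_spatialGrad_of_hasFDerivWithinAt {s : Set (EuclideanSpace ℝ (Fin m) × ℝ)}
    {u' : EuclideanSpace ℝ (Fin m) × ℝ →L[ℝ] ℝ} (hu : HasFDerivWithinAt u u' s p)
    (hs : ∀ᶠ y in 𝓝 p.1, (y, p.2) ∈ s) (w : EuclideanSpace ℝ (Fin m)) :
    inner ℝ (spatialGrad u p.1 p.2) w = u' (w, 0) := by
  have hslice : HasFDerivAt (fun y => u (y, p.2)) (u'.comp (.inl ℝ _ ℝ)) p.1 :=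
    hu.comp_hasFDerivAt (f := fun y => (y, p.2)) p.1 (hasFDerivAt_prodMk_left p.1 p.2) hs
  simp [spatialGrad, gradient, hslice.fderiv]

theorem inner_spatialGrad (hu : DifferentiableAt ℝ u p) (w : EuclideanSpace ℝ (Fin m)) :
    inner ℝ (spatialGrad u p.1 p.2) w = fderiv ℝ u p (w, 0) :=
  inner_spatialGrad_of_hasFDerivWithinAt hu.hasFDerivAt.hasFDerivWithinAt
    (Eventually.of_forall fun _ => mem_univ _) w

theorem spatialGrad_eventuallyEq (hu : ∀ᶠ q in 𝓝 p, DifferentiableAt ℝ u q) :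
    (fun q => spatialGrad u q.1 q.2) =ᶠ[𝓝 p] fun q => (InnerProductSpace.toDual ℝ _).symm
      ((fderiv ℝ u q).comp (ContinuousLinearMap.inl ℝ (EuclideanSpace ℝ (Fin m)) ℝ)) := by
  filter_upwards [hu] with q hq
  refine ext_inner_right ℝ fun w => ?_
  simp [inner_spatialGrad hq]

theorem differentiableAt_spatialGrad (hu : ContDiffAt ℝ 2 u p) :
    DifferentiableAt ℝ (fun q => spatialGrad u q.1 q.2) p := by
  have hu' : ∀ᶠ q in 𝓝 p, DifferentiableAt ℝ u q :=
    (hu.eventually (by simp)).mono fun q hq => hq.differentiableAt two_ne_zero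
  refine DifferentiableAt.congr_of_eventuallyEq ?_ (spatialGrad_eventuallyEq hu')
  exact (InnerProductSpace.toDual ℝ _).symm.differentiable.differentiableAt.comp p
    ((differentiableAt_fderiv_of_contDiffAt hu).clm_comp (differentiableAt_const _))

theorem inner_fderiv_spatialGrad (hu : ContDiffAt ℝ 2 u p) (a : EuclideanSpace ℝ (Fin m) × ℝ)
    (w : EuclideanSpace ℝ (Fin m)) :
    inner ℝ (fderiv ℝ (fun q => spatialGrad u q.1 q.2) p a) w =
      fderiv ℝ (fderiv ℝ u) p a (w, 0) := by
  have hinner : (fun q => inner ℝ (spatialGrad u q.1 q.2) w) =ᶠ[𝓝 p]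
      fun q => fderiv ℝ u q (w, 0) :=
    (hu.eventually (by simp)).mono fun q hq => inner_spatialGrad (hq.differentiableAt two_ne_zero) w
  rw [← fderiv_fderiv_apply_const hu, ← hinner.fderiv_eq,
    fderiv_inner_apply _ (differentiableAt_spatialGrad hu) (differentiableAt_const w)]
  simp

/-- The Hessian `D²f` in the space variables, as a bilinear form. -/
def spatialHess (f : EuclideanSpace ℝ (Fin m) × ℝ → ℝ) (p : EuclideanSpace ℝ (Fin m) × ℝ) :
    EuclideanSpace ℝ (Fin m) →L[ℝ] EuclideanSpace ℝ (Fin m) →L[ℝ] ℝ :=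
  (fderiv ℝ (fderiv ℝ f) p).bilinearComp (ContinuousLinearMap.inl ℝ _ ℝ)
    (ContinuousLinearMap.inl ℝ _ ℝ)

theorem spatialHess_apply (f : EuclideanSpace ℝ (Fin m) × ℝ → ℝ) (p : EuclideanSpace ℝ (Fin m) × ℝ)
    (a b : EuclideanSpace ℝ (Fin m)) :
    spatialHess f p a b = fderiv ℝ (fderiv ℝ f) p (a, 0) (b, 0) :=
  rfl

theorem inner_fderiv_slice_spatialGrad (hu : ContDiffAt ℝ 2 u p) (a b : EuclideanSpace ℝ (Fin m)) :
    inner ℝ (fderiv ℝ (fun y => spatialGrad u y p.2) p.1 a) b = spatialHess u p a b := by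
  have hslice := (differentiableAt_spatialGrad hu).hasFDerivAt.comp (f := fun y => (y, p.2)) p.1
    (hasFDerivAt_prodMk_left p.1 p.2)
  have : fderiv ℝ (fun y => spatialGrad u y p.2) p.1 a =
      fderiv ℝ (fun q => spatialGrad u q.1 q.2) p (a, 0) := congr($(hslice.fderiv) a)
  rw [this, inner_fderiv_spatialGrad hu, spatialHess_apply]

theorem vecDiv_spatialGrad (hu : ContDiffAt ℝ 2 u p) :
    vecDiv (fun y => spatialGrad u y p.2) p.1 =
      ∑ i, spatialHess u p (EuclideanSpace.single i 1) (EuclideanSpace.single i 1) := by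
  refine Finset.sum_congr rfl fun i _ => ?_
  rw [← inner_fderiv_slice_spatialGrad hu, EuclideanSpace.inner_single_right]
  simp

/-- The linear parabolic operator `(1 + |ξ|²) (∂ₜ - Δ) + D²(ξ, ξ)` with constant coefficients; for
`ξ = Du` it is mean curvature flow in nondivergence form, multiplied by `1 + |Du|²`. -/
def mcfOp (ξ : EuclideanSpace ℝ (Fin m)) (f : EuclideanSpace ℝ (Fin m) × ℝ → ℝ)
    (p : EuclideanSpace ℝ (Fin m) × ℝ) : ℝ :=
  (1 + ‖ξ‖ ^ 2) * (fderiv ℝ f p (0, 1) -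
      ∑ i, spatialHess f p (EuclideanSpace.single i 1) (EuclideanSpace.single i 1))
    + spatialHess f p ξ ξ

theorem mcfEqAt.mcfOp_eq_zero (hu : ContDiffAt ℝ 2 u p) (h : mcfEqAt u p.1 p.2) :
    mcfOp (spatialGrad u p.1 p.2) u p = 0 := by
  have hslice : DifferentiableAt ℝ (fun y => spatialGrad u y p.2) p.1 :=
    (differentiableAt_spatialGrad hu).comp (f := fun y => (y, p.2)) p.1 (by fun_prop)
  have htime : deriv (fun s => u (p.1, s)) p.2 = fderiv ℝ u p (0, 1) :=
    ((hu.differentiableAt two_ne_zero).hasFDerivAt.comp_hasDerivAt p.2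
      ((hasDerivAt_const p.2 p.1).prodMk (hasDerivAt_id p.2))).deriv
  have hdiv := one_add_normSq_mul_vecDiv_normalize hslice
  rw [vecDiv_spatialGrad hu, real_inner_comm, inner_fderiv_slice_spatialGrad hu] at hdiv
  rw [mcfEqAt, htime] at h
  rw [mcfOp, h]
  simp only [gradFn]
  linear_combination hdiv

theorem mcfOp_const_add (ξ : EuclideanSpace ℝ (Fin m)) (c : ℝ)
    (f : EuclideanSpace ℝ (Fin m) × ℝ → ℝ) : mcfOp ξ (fun q => c + f q) p = mcfOp ξ f p := by
  have : fderiv ℝ (fun q => c + f q) = fderiv ℝ f := funext fun q => fderiv_const_add c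
  simp only [mcfOp, spatialHess, this]

theorem spatialHess_mul_apply_self (hf : ContDiffAt ℝ 2 f p) (hg : ContDiffAt ℝ 2 g p)
    (a : EuclideanSpace ℝ (Fin m)) :
    spatialHess (fun q => f q * g q) p a a =
      f p * spatialHess g p a a
        + 2 * (inner ℝ (spatialGrad f p.1 p.2) a * inner ℝ (spatialGrad g p.1 p.2) a)
        + g p * spatialHess f p a a := by
  rw [inner_spatialGrad (hf.differentiableAt two_ne_zero),
    inner_spatialGrad (hg.differentiableAt two_ne_zero)]
  exact fderiv_fderiv_mul_apply_self hf hg (a, 0)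

theorem spatialGrad_mul (hf : DifferentiableAt ℝ f p) (hg : DifferentiableAt ℝ g p) :
    spatialGrad (fun q => f q * g q) p.1 p.2 =
      f p • spatialGrad g p.1 p.2 + g p • spatialGrad f p.1 p.2 := by
  refine ext_inner_right ℝ fun w => ?_
  simp [inner_add_left, real_inner_smul_left, inner_spatialGrad, hf, hg, hf.fun_mul hg,
    fderiv_fun_mul]

theorem spatialGrad_const_add (c : ℝ) (f : EuclideanSpace ℝ (Fin m) × ℝ → ℝ) :
    spatialGrad (fun q => c + f q) p.1 p.2 = spatialGrad f p.1 p.2 := by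
  simp [spatialGrad, gradient]

theorem mcfOp_mul (ξ : EuclideanSpace ℝ (Fin m)) (hf : ContDiffAt ℝ 2 f p)
    (hg : ContDiffAt ℝ 2 g p) :
    mcfOp ξ (fun q => f q * g q) p = f p * mcfOp ξ g p + g p * mcfOp ξ f p
      - 2 * (1 + ‖ξ‖ ^ 2) * inner ℝ (spatialGrad f p.1 p.2) (spatialGrad g p.1 p.2)
      + 2 * (inner ℝ (spatialGrad f p.1 p.2) ξ * inner ℝ (spatialGrad g p.1 p.2) ξ) := by
  have htime : fderiv ℝ (fun q => f q * g q) p (0, 1) =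
      f p * fderiv ℝ g p (0, 1) + g p * fderiv ℝ f p (0, 1) := by
    simp [fderiv_fun_mul (hf.differentiableAt two_ne_zero) (hg.differentiableAt two_ne_zero)]
  have hparseval : ∑ i, inner ℝ (spatialGrad f p.1 p.2) (EuclideanSpace.single i 1) *
      inner ℝ (spatialGrad g p.1 p.2) (EuclideanSpace.single i 1) =
      inner ℝ (spatialGrad f p.1 p.2) (spatialGrad g p.1 p.2) := by
    simpa [real_inner_comm] using (EuclideanSpace.basisFun (Fin m) ℝ).sum_inner_mul_inner
      (spatialGrad f p.1 p.2) (spatialGrad g p.1 p.2)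
  simp only [mcfOp, htime, spatialHess_mul_apply_self hf hg, Finset.sum_add_distrib,
    ← Finset.mul_sum, hparseval]
  ring

theorem le_mcfOp_of_backward_max (hf : ContDiffAt ℝ 2 f p) {c : ℝ}
    (hmax : ∀ᶠ q in 𝓝 p, q.2 ≤ p.2 → f q ≤ f p + c * (q.2 - p.2))
    (ξ : EuclideanSpace ℝ (Fin m)) : (1 + ‖ξ‖ ^ 2) * c ≤ mcfOp ξ f p := by
  have htime : c ≤ fderiv ℝ f p (0, 1) := by
    refine le_fderiv_of_eventually_le_left (hf.differentiableAt two_ne_zero) ?_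
    filter_upwards [((tendsto_add_smul_nhds_zero p (0, 1)).eventually hmax).filter_mono
      nhdsWithin_le_nhds, self_mem_nhdsWithin] with s hs hneg
    simpa using hs (by simpa using le_of_lt hneg)
  have hspace (w : EuclideanSpace ℝ (Fin m)) : spatialHess f p w w ≤ 0 := by
    refine fderiv_fderiv_apply_self_nonpos hf ?_
    filter_upwards [(tendsto_add_smul_nhds_zero p (w, 0)).eventually hmax] with s hs
    simpa using hs (by simp)
  have hparabolic := norm_sq_mul_sum_le_of_nonpos (EuclideanSpace.basisFun (Fin m) ℝ) hspace ξ
  have htrace := Finset.sum_nonpos fun i (_ : i ∈ Finset.univ) =>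
    hspace (EuclideanSpace.single i 1)
  simp only [EuclideanSpace.basisFun_apply] at hparabolic
  have := mul_le_mul_of_nonneg_left htime (show 0 ≤ 1 + ‖ξ‖ ^ 2 by positivity)
  rw [mcfOp]
  linarith

theorem differentiableAt_spatialHess_apply_self
    {a : EuclideanSpace ℝ (Fin m) × ℝ → EuclideanSpace ℝ (Fin m)}
    (hu : ContDiffAt ℝ 3 u p) (ha : DifferentiableAt ℝ a p) :
    DifferentiableAt ℝ (fun q => spatialHess u q (a q) (a q)) p := by
  have hD : DifferentiableAt ℝ (fderiv ℝ (fderiv ℝ u)) p :=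
    differentiableAt_fderiv_of_contDiffAt (hu.fderiv_right (by norm_num))
  have ha0 : DifferentiableAt ℝ (fun q => (a q, (0 : ℝ))) p := ha.prodMk (differentiableAt_const _)
  exact (hD.clm_apply ha0).clm_apply ha0

theorem fderiv_spatialHess_apply_self
    {a : EuclideanSpace ℝ (Fin m) × ℝ → EuclideanSpace ℝ (Fin m)}
    (hu : ContDiffAt ℝ 3 u p) (ha : DifferentiableAt ℝ a p) (d : EuclideanSpace ℝ (Fin m) × ℝ) :
    fderiv ℝ (fun q => spatialHess u q (a q) (a q)) p d =
      spatialHess (fun q => fderiv ℝ u q d) p (a p) (a p)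
        + 2 * spatialHess u p (fderiv ℝ a p d) (a p) := by
  have hD : DifferentiableAt ℝ (fderiv ℝ (fderiv ℝ u)) p :=
    differentiableAt_fderiv_of_contDiffAt (hu.fderiv_right (by norm_num))
  have ha0 : DifferentiableAt ℝ (fun q => (a q, (0 : ℝ))) p := ha.prodMk (differentiableAt_const _)
  have hda : fderiv ℝ (fun q => (a q, (0 : ℝ))) p d = (fderiv ℝ a p d, 0) := by
    rw [ha.fderiv_prodMk (differentiableAt_const _)]
    simp
  simp only [spatialHess_apply, fderiv_fderiv_fderiv_apply_const hu]
  rw [fderiv_clm_apply (hD.clm_apply ha0) ha0, fderiv_clm_apply hD ha0]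
  simp only [ContinuousLinearMap.flip_add, add_apply, ContinuousLinearMap.comp_apply,
    ContinuousLinearMap.flip_apply, hda,
    fderiv_fderiv_apply_comm (hu.of_le (by norm_num : (2 : WithTop ℕ∞) ≤ 3)) (a p, 0)]
  ring

theorem fderiv_mcfOp {a : EuclideanSpace ℝ (Fin m) × ℝ → EuclideanSpace ℝ (Fin m)}
    (hu : ContDiffAt ℝ 3 u p) (ha : DifferentiableAt ℝ a p) (d : EuclideanSpace ℝ (Fin m) × ℝ) :
    fderiv ℝ (fun q => mcfOp (a q) u q) p d =
      mcfOp (a p) (fun q => fderiv ℝ u q d) p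
        + 2 * inner ℝ (a p) (fderiv ℝ a p d) * (fderiv ℝ u p (0, 1) -
          ∑ i, spatialHess u p (EuclideanSpace.single i 1) (EuclideanSpace.single i 1))
        + 2 * spatialHess u p (fderiv ℝ a p d) (a p) := by
  have hu2 : ContDiffAt ℝ 2 u p := hu.of_le (by norm_num)
  have htime : DifferentiableAt ℝ (fun q => fderiv ℝ u q (0, 1)) p :=
    (differentiableAt_fderiv_of_contDiffAt hu2).clm_apply (differentiableAt_const _)
  have hlap (i : Fin m) := differentiableAt_spatialHess_apply_self hu
    (differentiableAt_const (EuclideanSpace.single i (1 : ℝ)))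
  have hlap_sum := DifferentiableAt.fun_sum fun i (_ : i ∈ Finset.univ) => hlap i
  have hnorm := ha.hasFDerivAt.norm_sq.const_add 1
  have hhess := differentiableAt_spatialHess_apply_self hu ha
  simp only [mcfOp]
  rw [fderiv_fun_add (hnorm.differentiableAt.fun_mul (htime.fun_sub hlap_sum)) hhess,
    fderiv_fun_mul hnorm.differentiableAt (htime.fun_sub hlap_sum), fderiv_fun_sub htime hlap_sum,
    fderiv_fun_sum fun i _ => hlap i, hnorm.fderiv]
  simp only [add_apply, smul_apply, sub_apply, sum_apply, ContinuousLinearMap.comp_apply,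
    coe_innerSL_apply, fderiv_spatialHess_apply_self hu, ha, differentiableAt_const,
    fderiv_fun_const, Pi.zero_apply, zero_apply, map_zero, fderiv_fderiv_apply_const hu2,
    fderiv_fderiv_apply_comm hu2 d, nsmul_eq_mul, Nat.cast_ofNat, smul_eq_mul, mul_zero, add_zero]
  ring

theorem one_add_normSq_mul_mcfOp_fderiv (hu : ContDiffAt ℝ 3 u p)
    (hmcf : ∀ᶠ q in 𝓝 p, mcfOp (spatialGrad u q.1 q.2) u q = 0)
    {ξ h : EuclideanSpace ℝ (Fin m)} (hξ : ξ = spatialGrad u p.1 p.2)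
    (hh : h = spatialGrad (fun q => fderiv ℝ u q (ξ, 0)) p.1 p.2) :
    (1 + ‖ξ‖ ^ 2) * mcfOp ξ (fun q => fderiv ℝ u q (ξ, 0)) p =
      2 * inner ℝ h ξ ^ 2 - 2 * (1 + ‖ξ‖ ^ 2) * ‖h‖ ^ 2 := by
  have hu2 : ContDiffAt ℝ 2 u p := hu.of_le (by norm_num)
  have hψ : DifferentiableAt ℝ (fun q => fderiv ℝ u q (ξ, 0)) p :=
    (differentiableAt_fderiv_of_contDiffAt hu2).clm_apply (differentiableAt_const _)
  have hhess (w : EuclideanSpace ℝ (Fin m)) : spatialHess u p w ξ = inner ℝ h w := by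
    rw [hh, inner_spatialGrad hψ, fderiv_fderiv_apply_const hu2, spatialHess_apply]
  have hDu : fderiv ℝ (fun q => spatialGrad u q.1 q.2) p (ξ, 0) = h := by
    refine ext_inner_right ℝ fun w => ?_
    rw [inner_fderiv_spatialGrad hu2, fderiv_fderiv_apply_comm hu2, ← hhess, spatialHess_apply]
  have hlin := fderiv_mcfOp hu (differentiableAt_spatialGrad hu2) (ξ, 0)
  have hzero := hmcf.self_of_nhds
  have hmcf' : (fun q => mcfOp (spatialGrad u q.1 q.2) u q) =ᶠ[𝓝 p] fun _ => (0 : ℝ) := hmcf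
  rw [hmcf'.fderiv_eq, fderiv_const_apply, zero_apply, hDu, ← hξ, hhess,
    real_inner_self_eq_norm_sq, real_inner_comm] at hlin
  rw [mcfOp, ← hξ, hhess] at hzero
  linear_combination -(1 + ‖ξ‖ ^ 2) * hlin - 2 * inner ℝ h ξ * hzero

theorem mcfOp_one_add_fderiv_mul_sq_nonpos (hu : ContDiffAt ℝ 3 u p)
    (hmcf : ∀ᶠ q in 𝓝 p, mcfOp (spatialGrad u q.1 q.2) u q = 0)
    {ξ : EuclideanSpace ℝ (Fin m)} (hξ : ξ = spatialGrad u p.1 p.2) :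
    mcfOp ξ (fun q => (1 + fderiv ℝ u q (ξ, 0)) * u q ^ 2) p ≤ 0 := by
  have hu2 : ContDiffAt ℝ 2 u p := hu.of_le (by norm_num)
  have hu1 := hu2.differentiableAt two_ne_zero
  have hψ : ContDiffAt ℝ 2 (fun q => fderiv ℝ u q (ξ, 0)) p :=
    (hu.fderiv_right (by norm_num)).clm_apply contDiffAt_const
  obtain ⟨h, hh⟩ : ∃ h, h = spatialGrad (fun q => fderiv ℝ u q (ξ, 0)) p.1 p.2 := ⟨_, rfl⟩
  have hψp : fderiv ℝ u p (ξ, 0) = ‖ξ‖ ^ 2 := by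
    rw [← inner_spatialGrad hu1, ← hξ, real_inner_self_eq_norm_sq]
  have hlin := one_add_normSq_mul_mcfOp_fderiv hu hmcf hξ hh
  have hzero : mcfOp ξ u p = 0 := hξ ▸ hmcf.self_of_nhds
  have hcomplete_square : (1 + ‖ξ‖ ^ 2) *
      mcfOp ξ (fun q => (1 + fderiv ℝ u q (ξ, 0)) * u q ^ 2) p =
        2 * (u p ^ 2 * (inner ℝ h ξ ^ 2 - ‖h‖ ^ 2 * ‖ξ‖ ^ 2)
          - ‖u p • h + (1 + ‖ξ‖ ^ 2) • ξ‖ ^ 2) := by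
    simp only [sq (u _)]
    rw [mcfOp_mul ξ (contDiffAt_const.add hψ) (hu2.mul hu2), mcfOp_mul ξ hu2 hu2,
      mcfOp_const_add, spatialGrad_const_add, spatialGrad_mul hu1 hu1, ← hξ, ← hh, hzero, hψp,
      norm_add_sq_real, norm_smul, norm_smul]
    simp only [inner_add_left, inner_add_right, real_inner_smul_left, real_inner_smul_right,
      real_inner_self_eq_norm_sq, mul_pow, Real.norm_eq_abs, sq_abs]
    linear_combination u p ^ 2 * hlin
  have hcs : inner ℝ h ξ ^ 2 ≤ ‖h‖ ^ 2 * ‖ξ‖ ^ 2 := by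
    rw [← mul_pow, sq_le_sq, abs_mul, abs_norm, abs_norm]
    exact abs_real_inner_le_norm h ξ
  have hnonpos : (1 + ‖ξ‖ ^ 2) *
      mcfOp ξ (fun q => (1 + fderiv ℝ u q (ξ, 0)) * u q ^ 2) p ≤ 0 := by
    rw [hcomplete_square]
    nlinarith [mul_nonneg (sq_nonneg (u p)) (sub_nonneg.2 hcs),
      sq_nonneg ‖u p • h + (1 + ‖ξ‖ ^ 2) • ξ‖]
  exact nonpos_of_mul_nonpos_right hnonpos (by positivity)

theorem not_backward_max_gradFn_mul_sq_sub (hu : ContDiffAt ℝ 3 u p)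
    (hmcf : ∀ᶠ q in 𝓝 p, mcfEqAt u q.1 q.2) {ε : ℝ} (hε : 0 < ε) :
    ¬ ∀ᶠ q in 𝓝 p, q.2 ≤ p.2 →
      gradFn u q.1 q.2 * u q ^ 2 - ε * q.2 ≤ gradFn u p.1 p.2 * u p ^ 2 - ε * p.2 := by
  intro hmax
  obtain ⟨ξ, hξ⟩ : ∃ ξ, ξ = spatialGrad u p.1 p.2 := ⟨_, rfl⟩
  have hu2 : ∀ᶠ q in 𝓝 p, ContDiffAt ℝ 2 u q :=
    (hu.of_le (by norm_num)).eventually (by simp)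
  have hinner {q} (hq : ContDiffAt ℝ 2 u q) :
      inner ℝ ξ (spatialGrad u q.1 q.2) = fderiv ℝ u q (ξ, 0) := by
    rw [real_inner_comm, inner_spatialGrad (hq.differentiableAt two_ne_zero)]
  have hφ : ContDiffAt ℝ 2 (fun q => (1 + fderiv ℝ u q (ξ, 0)) * u q ^ 2) p :=
    (contDiffAt_const.add ((hu.fderiv_right (by norm_num)).clm_apply contDiffAt_const)).mul
      (hu2.self_of_nhds.pow 2)
  have hφp : (1 + fderiv ℝ u p (ξ, 0)) * u p ^ 2 =
      √(1 + ‖ξ‖ ^ 2) * (gradFn u p.1 p.2 * u p ^ 2) := by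
    rw [← hinner hu2.self_of_nhds, gradFn, ← hξ, real_inner_self_eq_norm_sq, ← mul_assoc,
      Real.mul_self_sqrt (by positivity)]
  have hφmax : ∀ᶠ q in 𝓝 p, q.2 ≤ p.2 → (1 + fderiv ℝ u q (ξ, 0)) * u q ^ 2 ≤
      (1 + fderiv ℝ u p (ξ, 0)) * u p ^ 2 + √(1 + ‖ξ‖ ^ 2) * ε * (q.2 - p.2) := by
    filter_upwards [hmax, hu2] with q hq hq2 hle
    calc (1 + fderiv ℝ u q (ξ, 0)) * u q ^ 2
        ≤ √(1 + ‖ξ‖ ^ 2) * gradFn u q.1 q.2 * u q ^ 2 := by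
          rw [← hinner hq2]
          gcongr
          exact one_add_inner_le_sqrt_mul_sqrt ξ _
      _ = √(1 + ‖ξ‖ ^ 2) * (gradFn u q.1 q.2 * u q ^ 2) := mul_assoc _ _ _
      _ ≤ √(1 + ‖ξ‖ ^ 2) * (gradFn u p.1 p.2 * u p ^ 2 + ε * (q.2 - p.2)) := by
          gcongr
          linarith [hq hle]
      _ = _ := by rw [hφp]; ring
  have hop : ∀ᶠ q in 𝓝 p, mcfOp (spatialGrad u q.1 q.2) u q = 0 := by
    filter_upwards [hmcf, hu2] with q hq hq2 using hq.mcfOp_eq_zero hq2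
  have hlower := le_mcfOp_of_backward_max hφ hφmax ξ
  have hupper := mcfOp_one_add_fderiv_mul_sq_nonpos hu hop hξ
  have hpos : 0 < (1 + ‖ξ‖ ^ 2) * (√(1 + ‖ξ‖ ^ 2) * ε) := by positivity
  exact (hpos.trans_le (hlower.trans hupper)).false

end Spacetime

section RelativelyOpen

variable {X : Type*} [TopologicalSpace X] {S Ω : Set X} {w : X → ℝ}

theorem continuousOn_indicator_of_tendsto_zero (hΩ : ∃ U, IsOpen U ∧ Ω = U ∩ S)
    (hw : ContinuousOn w Ω)
    (hzero : ∀ p ∈ S, p ∈ closure Ω → p ∉ Ω → Tendsto w (𝓝[Ω] p) (𝓝 0)) :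
    ContinuousOn (Ω.indicator w) S := by
  intro p hp
  by_cases hpΩ : p ∈ Ω
  · have hnhds : Ω ∈ 𝓝[S] p := by
      obtain ⟨U, hU, rfl⟩ := hΩ
      exact inter_mem (mem_nhdsWithin_of_mem_nhds (hU.mem_nhds hpΩ.1)) self_mem_nhdsWithin
    refine ContinuousWithinAt.mono_of_mem_nhdsWithin (t := Ω) ?_ hnhds
    exact (hw p hpΩ).congr (fun q hq => indicator_of_mem hq w) (indicator_of_mem hpΩ w)
  · have hlim : Tendsto w (𝓝[Ω] p) (𝓝 0) := by
      by_cases hcl : p ∈ closure Ω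
      · exact hzero p hp hcl hpΩ
      · simp [notMem_closure_iff_nhdsWithin_eq_bot.1 hcl]
    rw [ContinuousWithinAt, indicator_of_notMem hpΩ]
    refine tendsto_nhdsWithin_of_tendsto_nhds fun N hN => mem_map.2 ?_
    filter_upwards [eventually_nhdsWithin_iff.1 (hlim.eventually_mem hN)] with q hq
    by_cases hqΩ : q ∈ Ω
    · simpa [hqΩ] using hq hqΩ
    · simpa [hqΩ] using mem_of_mem_nhds hN

theorem exists_isOpen_inter_neg_eq (hΩ : ∃ U, IsOpen U ∧ Ω = U ∩ S) (hw : ContinuousOn w Ω) :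
    ∃ U, IsOpen U ∧ Ω ∩ {q | w q < 0} = U ∩ S := by
  obtain ⟨V, hV, hVΩ⟩ := continuousOn_iff'.1 hw (Iio 0) isOpen_Iio
  obtain ⟨U, hU, rfl⟩ := hΩ
  exact ⟨V ∩ U, hV.inter hU, by rw [inter_assoc V U S, ← hVΩ, inter_comm]; rfl⟩

theorem tendsto_zero_of_mem_closure_neg (hw : ContinuousOn w Ω) {p : X}
    (hzero : p ∈ closure Ω → p ∉ Ω → Tendsto w (𝓝[Ω] p) (𝓝 0))
    (hcl : p ∈ closure (Ω ∩ {q | w q < 0})) (hp : p ∉ Ω ∩ {q | w q < 0}) :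
    Tendsto w (𝓝[Ω ∩ {q | w q < 0}] p) (𝓝 0) := by
  have hle : 𝓝[Ω ∩ {q | w q < 0}] p ≤ 𝓝[Ω] p := nhdsWithin_mono p inter_subset_left
  by_cases hpΩ : p ∈ Ω
  · have hlim : Tendsto w (𝓝[Ω ∩ {q | w q < 0}] p) (𝓝 (w p)) := (hw p hpΩ).mono_left hle
    have : (𝓝[Ω ∩ {q | w q < 0}] p).NeBot := mem_closure_iff_nhdsWithin_neBot.1 hcl
    have hnonpos : w p ≤ 0 := le_of_tendsto hlim
      (eventually_nhdsWithin_of_forall fun q hq => le_of_lt hq.2)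
    have hnonneg : 0 ≤ w p := le_of_not_gt fun hneg => hp ⟨hpΩ, hneg⟩
    rwa [hnonpos.antisymm hnonneg] at hlim
  · exact (hzero (closure_mono inter_subset_left hcl) hpΩ).mono_left hle

end RelativelyOpen

section MaximumPrinciple

theorem closure_inter_time_le_subset {E : Type*} [TopologicalSpace E] {Ω : Set (E × ℝ)}
    (hΩ : Ω ⊆ {p | 0 ≤ p.2}) (T : ℝ) : closure (Ω ∩ {p : E × ℝ | p.2 ≤ T}) ⊆ {p | p.2 ∈ Icc 0 T} :=
  closure_minimal (fun _ hq => ⟨hΩ hq.1, hq.2⟩) (isClosed_Icc.preimage continuous_snd)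

theorem continuousOn_of_forall_time_le {E Y : Type*} [TopologicalSpace E] [TopologicalSpace Y]
    {Ω : Set (E × ℝ)} {F : E × ℝ → Y}
    (hF : ∀ T > (0 : ℝ), ContinuousOn F (Ω ∩ {p | p.2 ≤ T})) : ContinuousOn F Ω := by
  intro p hp
  have hlt : p.2 < |p.2| + 1 := (le_abs_self p.2).trans_lt (lt_add_one _)
  refine (hF (|p.2| + 1) (by positivity) p ⟨hp, hlt.le⟩).mono_of_mem_nhdsWithin
    (inter_mem self_mem_nhdsWithin (mem_nhdsWithin_of_mem_nhds ?_))
  exact mem_of_superset (continuous_snd.continuousAt.eventually (gt_mem_nhds hlt))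
    fun q (hq : q.2 < |p.2| + 1) => hq.le

variable {E : Type*} [PseudoMetricSpace E] [ProperSpace E] {Ω : Set (E × ℝ)} {w : E × ℝ → ℝ}

theorem isCompact_closure_inter_time_le {T : ℝ} (hT : 0 ≤ T)
    (hΩ_bdd : ∀ T > (0 : ℝ), Bornology.IsBounded (Ω ∩ {p : E × ℝ | p.2 ≤ T})) :
    IsCompact (closure (Ω ∩ {p : E × ℝ | p.2 ≤ T})) :=
  ((hΩ_bdd (T + 1) (by linarith)).subset (inter_subset_inter_right Ω fun _ (hq : _ ≤ T) =>
    hq.trans (le_add_of_nonneg_right zero_le_one))).isCompact_closure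

theorem sub_mul_time_le_of_not_backward_max (hΩ : ∃ U, IsOpen U ∧ Ω = U ∩ {p | 0 ≤ p.2})
    (hΩ_bdd : ∀ T > (0 : ℝ), Bornology.IsBounded (Ω ∩ {p : E × ℝ | p.2 ≤ T}))
    (hw : ContinuousOn (Ω.indicator w) {p | 0 ≤ p.2}) {M ε : ℝ} (hM : 0 ≤ M) (hε : 0 ≤ ε)
    (hinit : ∀ p ∈ Ω, p.2 = 0 → w p ≤ M)
    (hmax : ∀ p ∈ Ω, 0 < p.2 → ¬ ∀ᶠ q in 𝓝 p, q.2 ≤ p.2 → w q - ε * q.2 ≤ w p - ε * p.2)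
    {p : E × ℝ} (hp : p ∈ Ω) : w p - ε * p.2 ≤ M := by
  obtain ⟨U, hU, hΩU⟩ := hΩ
  have hΩ_nonneg : Ω ⊆ {q | 0 ≤ q.2} := hΩU ▸ inter_subset_right
  set K := closure (Ω ∩ {q : E × ℝ | q.2 ≤ p.2})
  have hK : IsCompact K := isCompact_closure_inter_time_le (hΩ_nonneg hp) hΩ_bdd
  have hK_time : K ⊆ {q | q.2 ∈ Icc 0 p.2} := closure_inter_time_le_subset hΩ_nonneg p.2
  have hmemK {q : E × ℝ} (hq : q ∈ Ω) (hqp : q.2 ≤ p.2) : q ∈ K := subset_closure ⟨hq, hqp⟩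
  obtain ⟨q, hqK, hq⟩ := hK.exists_isMaxOn ⟨p, hmemK hp le_rfl⟩
    ((hw.mono fun q hq => (hK_time hq).1).sub
      (by fun_prop : ContinuousOn (fun q : E × ℝ => ε * q.2) K))
  have hpq : w p - ε * p.2 ≤ Ω.indicator w q - ε * q.2 := by
    simpa [hp] using hq (hmemK hp le_rfl)
  refine hpq.trans ?_
  have hεq : 0 ≤ ε * q.2 := mul_nonneg hε (hK_time hqK).1
  by_cases hqΩ : q ∈ Ω
  · rcases (hK_time hqK).1.eq_or_lt with hq0 | hpos
    · rw [indicator_of_mem hqΩ]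
      linarith [hinit q hqΩ hq0.symm]
    · refine absurd ?_ (hmax q hqΩ hpos)
      have hqU : q ∈ U := (hΩU ▸ hqΩ : q ∈ U ∩ {q | 0 ≤ q.2}).1
      filter_upwards [hU.mem_nhds hqU, continuous_snd.continuousAt.eventually (lt_mem_nhds hpos)]
        with z hzU hz0 hzq
      have hz : z ∈ Ω := hΩU ▸ ⟨hzU, hz0.le⟩
      simpa [hz, hqΩ] using hq (hmemK hz (hzq.trans (hK_time hqK).2))
  · rw [indicator_of_notMem hqΩ]
    linarith

theorem le_sSup_initial_of_not_backward_max (hΩ : ∃ U, IsOpen U ∧ Ω = U ∩ {p | 0 ≤ p.2})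
    (hΩ_bdd : ∀ T > (0 : ℝ), Bornology.IsBounded (Ω ∩ {p : E × ℝ | p.2 ≤ T}))
    (hw : ContinuousOn w Ω) (hw_nonneg : ∀ p ∈ Ω, 0 ≤ w p)
    (hw_zero : ∀ p : E × ℝ, 0 ≤ p.2 → p ∈ closure Ω → p ∉ Ω → Tendsto w (𝓝[Ω] p) (𝓝 0))
    (hmax : ∀ ε > 0, ∀ p ∈ Ω, 0 < p.2 →
      ¬ ∀ᶠ q in 𝓝 p, q.2 ≤ p.2 → w q - ε * q.2 ≤ w p - ε * p.2)
    {p : E × ℝ} (hp : p ∈ Ω) :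
    w p ≤ sSup {r | ∃ y, (y, (0 : ℝ)) ∈ Ω ∧ r = w (y, 0)} := by
  have hcont : ContinuousOn (Ω.indicator w) {p | 0 ≤ p.2} :=
    continuousOn_indicator_of_tendsto_zero hΩ hw hw_zero
  have hΩ_nonneg : Ω ⊆ {q | 0 ≤ q.2} := by
    obtain ⟨U, -, rfl⟩ := hΩ
    exact inter_subset_right
  have hbdd : BddAbove {r | ∃ y, (y, (0 : ℝ)) ∈ Ω ∧ r = w (y, 0)} := by
    refine ((isCompact_closure_inter_time_le le_rfl hΩ_bdd).bddAbove_image (hcont.mono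
      fun q hq => (closure_inter_time_le_subset hΩ_nonneg 0 hq).1)).mono ?_
    rintro _ ⟨y, hy, rfl⟩
    exact ⟨(y, 0), subset_closure ⟨hy, le_refl (0 : ℝ)⟩, indicator_of_mem hy w⟩
  have hsup_nonneg : 0 ≤ sSup {r | ∃ y, (y, (0 : ℝ)) ∈ Ω ∧ r = w (y, 0)} := by
    refine Real.sSup_nonneg ?_
    rintro _ ⟨y, hy, rfl⟩
    exact hw_nonneg _ hy
  have hinit : ∀ q ∈ Ω, q.2 = 0 → w q ≤ sSup {r | ∃ y, (y, (0 : ℝ)) ∈ Ω ∧ r = w (y, 0)} := by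
    rintro ⟨y, _⟩ hy rfl
    exact le_csSup hbdd ⟨y, hy, rfl⟩
  refine le_of_forall_pos_le_add fun δ hδ => ?_
  have hp0 : 0 < p.2 + 1 := add_pos_of_nonneg_of_pos (hΩ_nonneg hp) one_pos
  have hpenalized := sub_mul_time_le_of_not_backward_max hΩ hΩ_bdd hcont hsup_nonneg
    (div_pos hδ hp0).le hinit (hmax _ (div_pos hδ hp0)) hp
  have hsmall : δ / (p.2 + 1) * p.2 ≤ δ := by
    rw [div_mul_eq_mul_div, div_le_iff₀ hp0]
    linarith
  linarith

end MaximumPrinciple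

section BoundaryRegularity

variable {X Y : Type*} [NormedAddCommGroup X] [NormedSpace ℝ X] [NormedAddCommGroup Y]
  [NormedSpace ℝ Y] {C U : Set X} {f : X → Y}

theorem uniqueDiffOn_inter_convex (hC : Convex ℝ C) (hC_int : (interior C).Nonempty)
    (hU : IsOpen U) : UniqueDiffOn ℝ (U ∩ C) :=
  inter_comm C U ▸ (uniqueDiffOn_convex hC hC_int).inter hU

theorem continuousOn_fderivWithin_of_iteratedFDerivWithin {s : Set X} (hs : UniqueDiffOn ℝ s)
    (hf : ContinuousOn (iteratedFDerivWithin ℝ 1 f s) s) : ContinuousOn (fderivWithin ℝ f s) s := by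
  intro p hp
  refine tendsto_iff_dist_tendsto_zero.2 ((tendsto_iff_dist_tendsto_zero.1 (hf p hp)).congr' ?_)
  filter_upwards [self_mem_nhdsWithin] with q hq
    using dist_iteratedFDerivWithin_one f f (hs q hq) (hs p hp)

theorem contDiffOn_one_of_continuousOn_fderivWithin (hC : Convex ℝ C) (hC_closed : IsClosed C)
    (hC_int : (interior C).Nonempty) (hU : IsOpen U) (hf : ContinuousOn f (U ∩ C))
    (hdiff : DifferentiableOn ℝ f (U ∩ interior C))
    (hderiv : ContinuousOn (fderivWithin ℝ f (U ∩ C)) (U ∩ C)) : ContDiffOn ℝ 1 f (U ∩ C) := by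
  rw [← zero_add (1 : WithTop ℕ∞),
    contDiffOn_succ_iff_fderivWithin (uniqueDiffOn_inter_convex hC hC_int hU)]
  refine ⟨fun p hp => ?_, by simp, contDiffOn_zero.2 hderiv⟩
  obtain ⟨r, hr, hrU⟩ := nhds_basis_closedBall.mem_iff.1 (hU.mem_nhds hp.1)
  set s := ball p r ∩ interior C
  have hsU : s ⊆ U ∩ interior C := inter_subset_inter_left _ (ball_subset_closedBall.trans hrU)
  have hclosure : closure s ⊆ U ∩ C :=
    (closure_inter_subset_inter_closure _ _).trans (inter_subset_inter
      (closure_ball_subset_closedBall.trans hrU) (closure_minimal interior_subset hC_closed))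
  have hs_sub : s ⊆ U ∩ C := subset_closure.trans hclosure
  have hfderiv : Tendsto (fderiv ℝ f) (𝓝[s] p) (𝓝 (fderivWithin ℝ f (U ∩ C) p)) := by
    refine ((hderiv p hp).mono hs_sub).tendsto.congr' ?_
    filter_upwards [self_mem_nhdsWithin] with q hq
    exact fderivWithin_of_mem_nhds
      (mem_of_superset ((hU.inter isOpen_interior).mem_nhds (hsU hq))
        (inter_subset_inter_right U interior_subset))
  have hnhds : closure s ∈ 𝓝[U ∩ C] p := by
    refine mem_of_superset (inter_mem_nhdsWithin _ (ball_mem_nhds p hr)) fun q hq => ?_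
    refine isOpen_ball.inter_closure ⟨hq.2, ?_⟩
    rw [hC.closure_interior_eq_closure_of_nonempty_interior hC_int]
    exact subset_closure hq.1.2
  exact ((hasFDerivWithinAt_closure_of_tendsto_fderiv (hdiff.mono hsU)
    ((convex_ball p r).inter hC.interior) (isOpen_ball.inter isOpen_interior)
    (fun q hq => (hf q (hclosure hq)).mono hs_sub) hfderiv).mono_of_mem_nhdsWithin
      hnhds).differentiableWithinAt

end BoundaryRegularity

section GradientFunction

variable {m : ℕ} {u : EuclideanSpace ℝ (Fin m) × ℝ → ℝ} {Ω : Set (EuclideanSpace ℝ (Fin m) × ℝ)}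
  {p : EuclideanSpace ℝ (Fin m) × ℝ}

theorem interior_setOf_time_nonneg (m : ℕ) :
    interior {p : EuclideanSpace ℝ (Fin m) × ℝ | 0 ≤ p.2} = {p | 0 < p.2} := by
  have hprod : {p : EuclideanSpace ℝ (Fin m) × ℝ | 0 ≤ p.2} = univ ×ˢ Ici 0 := by ext; simp
  rw [hprod, interior_prod_eq, interior_univ, interior_Ici]
  ext
  simp

theorem convex_setOf_time_nonneg (m : ℕ) :
    Convex ℝ {p : EuclideanSpace ℝ (Fin m) × ℝ | 0 ≤ p.2} :=
  (convex_Ici 0).linear_preimage (LinearMap.snd ℝ _ ℝ)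

theorem nonempty_interior_setOf_time_nonneg (m : ℕ) :
    (interior {p : EuclideanSpace ℝ (Fin m) × ℝ | 0 ≤ p.2}).Nonempty := by
  rw [interior_setOf_time_nonneg]
  exact ⟨(0, 1), one_pos (α := ℝ)⟩

theorem isOpen_inter_time_pos (hΩ : ∃ U, IsOpen U ∧ Ω = U ∩ {p | 0 ≤ p.2}) :
    IsOpen (Ω ∩ {p | 0 < p.2}) := by
  obtain ⟨U, hU, rfl⟩ := hΩ
  have hsub : {p : EuclideanSpace ℝ (Fin m) × ℝ | 0 < p.2} ⊆ {p | 0 ≤ p.2} :=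
    fun q (hq : 0 < q.2) => hq.le
  rw [inter_assoc, inter_eq_right.2 hsub]
  exact hU.inter (isOpen_Ioi.preimage continuous_snd)

theorem uniqueDiffOn_of_relativelyOpen (hΩ : ∃ U, IsOpen U ∧ Ω = U ∩ {p | 0 ≤ p.2}) :
    UniqueDiffOn ℝ Ω := by
  obtain ⟨U, hU, rfl⟩ := hΩ
  exact uniqueDiffOn_inter_convex (convex_setOf_time_nonneg m)
    (nonempty_interior_setOf_time_nonneg m) hU

theorem gradFn_eq_of_hasFDerivWithinAt {u' : EuclideanSpace ℝ (Fin m) × ℝ →L[ℝ] ℝ}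
    (hu : HasFDerivWithinAt u u' Ω p) (hs : ∀ᶠ y in 𝓝 p.1, (y, p.2) ∈ Ω) :
    gradFn u p.1 p.2 = √(1 + ‖u'.comp (.inl ℝ _ ℝ)‖ ^ 2) := by
  have hgrad : spatialGrad u p.1 p.2 =
      (InnerProductSpace.toDual ℝ _).symm (u'.comp (.inl ℝ _ ℝ)) := by
    refine ext_inner_right ℝ fun w => ?_
    simp [inner_spatialGrad_of_hasFDerivWithinAt hu hs]
  rw [gradFn, hgrad, LinearIsometryEquiv.norm_map]

theorem gradFn_eq_of_differentiableOn (hΩ : ∃ U, IsOpen U ∧ Ω = U ∩ {p | 0 ≤ p.2})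
    (hu : DifferentiableOn ℝ u Ω) (hp : p ∈ Ω) :
    gradFn u p.1 p.2 = √(1 + ‖(fderivWithin ℝ u Ω p).comp (.inl ℝ _ ℝ)‖ ^ 2) := by
  refine gradFn_eq_of_hasFDerivWithinAt (hu p hp).hasFDerivWithinAt ?_
  obtain ⟨U, hU, rfl⟩ := hΩ
  have hslice : Tendsto (fun y => (y, p.2)) (𝓝 p.1) (𝓝 p) :=
    Continuous.tendsto' (by fun_prop) _ _ rfl
  filter_upwards [hslice.eventually_mem (hU.mem_nhds hp.1)] with y hy using ⟨hy, hp.2⟩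

theorem continuousOn_gradFn (hΩ : ∃ U, IsOpen U ∧ Ω = U ∩ {p | 0 ≤ p.2})
    (hu : ContDiffOn ℝ 1 u Ω) : ContinuousOn (fun p => gradFn u p.1 p.2) Ω := by
  have hderiv : ContinuousOn (fderivWithin ℝ u Ω) Ω :=
    hu.continuousOn_fderivWithin (uniqueDiffOn_of_relativelyOpen hΩ) le_rfl
  refine ContinuousOn.congr ?_ fun p hp =>
    gradFn_eq_of_differentiableOn hΩ (hu.differentiableOn one_ne_zero) hp
  exact (continuousOn_const.add ((hderiv.clm_comp continuousOn_const).norm.pow 2)).sqrt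

theorem gradFn_le_of_norm_iteratedFDerivWithin_le (hΩ : ∃ U, IsOpen U ∧ Ω = U ∩ {p | 0 ≤ p.2})
    (hu : DifferentiableOn ℝ u Ω) (hp : p ∈ Ω) {C : ℝ}
    (hC : ‖iteratedFDerivWithin ℝ 1 u Ω p‖ ≤ C) : gradFn u p.1 p.2 ≤ √(1 + C ^ 2) := by
  rw [norm_iteratedFDerivWithin_one u (uniqueDiffOn_of_relativelyOpen hΩ p hp)] at hC
  rw [gradFn_eq_of_differentiableOn hΩ hu hp]
  gcongr
  calc ‖(fderivWithin ℝ u Ω p).comp (.inl ℝ _ ℝ)‖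
      ≤ ‖fderivWithin ℝ u Ω p‖ * ‖ContinuousLinearMap.inl ℝ (EuclideanSpace ℝ (Fin m)) ℝ‖ :=
        ContinuousLinearMap.opNorm_comp_le _ _
    _ ≤ C := (mul_le_of_le_one_right (norm_nonneg _)
        (ContinuousLinearMap.norm_inl_le_one ℝ _ _)).trans hC

theorem tendsto_gradFn_mul_sq_of_tendsto_zero {l : Filter (EuclideanSpace ℝ (Fin m) × ℝ)}
    (hu : Tendsto u l (𝓝 0)) {C : ℝ} (hC : ∀ᶠ q in l, gradFn u q.1 q.2 ≤ C) :
    Tendsto (fun q => gradFn u q.1 q.2 * u q ^ 2) l (𝓝 0) := by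
  refine squeeze_zero' (.of_forall fun q => mul_nonneg (Real.sqrt_nonneg _) (sq_nonneg _))
    (hC.mono fun q hq => mul_le_mul_of_nonneg_right hq (sq_nonneg _)) ?_
  simpa using (hu.pow 2).const_mul C

theorem contDiffOn_one_of_extends_iteratedFDerivWithin
    (hΩ : ∃ U, IsOpen U ∧ Ω = U ∩ {p | 0 ≤ p.2}) (hu : ContinuousOn u Ω)
    (hdiff : DifferentiableOn ℝ u (Ω ∩ {p | 0 < p.2}))
    (hext : ∀ T > (0 : ℝ), ∃ g, ContinuousOn g (closure (Ω ∩ {p | p.2 ≤ T})) ∧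
      ∀ p ∈ Ω ∩ {p | p.2 ≤ T}, g p = iteratedFDerivWithin ℝ 1 u Ω p) :
    ContDiffOn ℝ 1 u Ω := by
  have hderiv : ContinuousOn (iteratedFDerivWithin ℝ 1 u Ω) Ω :=
    continuousOn_of_forall_time_le fun T hT => by
      obtain ⟨g, hg, hgu⟩ := hext T hT
      exact (hg.mono subset_closure).congr fun p hp => (hgu p hp).symm
  have hunique := uniqueDiffOn_of_relativelyOpen hΩ
  obtain ⟨U, hU, rfl⟩ := hΩ
  refine contDiffOn_one_of_continuousOn_fderivWithin (convex_setOf_time_nonneg m)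
    (isClosed_Ici.preimage continuous_snd) (nonempty_interior_setOf_time_nonneg m) hU hu ?_
    (continuousOn_fderivWithin_of_iteratedFDerivWithin hunique hderiv)
  rw [interior_setOf_time_nonneg]
  exact hdiff.mono fun q hq => ⟨⟨hq.1, (le_of_lt hq.2 : 0 ≤ q.2)⟩, hq.2⟩

end GradientFunction

theorem mcf_C1_estimate_general {m : ℕ} {Ω : Set (EuclideanSpace ℝ (Fin m) × ℝ)}
    {u : EuclideanSpace ℝ (Fin m) × ℝ → ℝ}
    (hΩ : ∃ U, IsOpen U ∧ Ω = U ∩ {p | 0 ≤ p.2})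
    (hu_C1 : ContDiffOn ℝ 1 u Ω)
    (hu_C3 : ContDiffOn ℝ 3 u (Ω ∩ {p | 0 < p.2}))
    (hu_eq : ∀ p ∈ Ω, 0 < p.2 → mcfEqAt u p.1 p.2)
    (hu_zero : ∀ p : EuclideanSpace ℝ (Fin m) × ℝ,
      0 ≤ p.2 → p ∈ closure Ω → p ∉ Ω → Tendsto u (𝓝[Ω] p) (𝓝 0))
    (hv_bdd : ∀ T > (0 : ℝ), ∃ C, ∀ p ∈ Ω ∩ {p | p.2 ≤ T}, gradFn u p.1 p.2 ≤ C)
    (hΩ_bdd : ∀ T > (0 : ℝ),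
      Bornology.IsBounded (Ω ∩ {p : EuclideanSpace ℝ (Fin m) × ℝ | p.2 ≤ T})) :
    ∀ p ∈ Ω, u p < 0 →
      gradFn u p.1 p.2 * (u p) ^ 2 ≤
        sSup {r : ℝ | ∃ y, (y, (0 : ℝ)) ∈ Ω ∧ u (y, 0) < 0 ∧
          r = gradFn u y 0 * (u (y, 0)) ^ 2} := by
  intro p hp hneg
  have hw : ContinuousOn (fun q => gradFn u q.1 q.2 * u q ^ 2) (Ω ∩ {q | u q < 0}) :=
    ((continuousOn_gradFn hΩ hu_C1).mul (hu_C1.continuousOn.pow 2)).mono inter_subset_left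
  have hw_zero (q : EuclideanSpace ℝ (Fin m) × ℝ) (hq : 0 ≤ q.2)
      (hcl : q ∈ closure (Ω ∩ {q | u q < 0})) (hq_notMem : q ∉ Ω ∩ {q | u q < 0}) :
      Tendsto (fun q => gradFn u q.1 q.2 * u q ^ 2) (𝓝[Ω ∩ {q | u q < 0}] q) (𝓝 0) := by
    obtain ⟨C, hC⟩ := hv_bdd (q.2 + 1) (by linarith)
    refine tendsto_gradFn_mul_sq_of_tendsto_zero (C := C) (tendsto_zero_of_mem_closure_neg
      hu_C1.continuousOn (hu_zero q hq) hcl hq_notMem) ?_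
    filter_upwards [self_mem_nhdsWithin, mem_nhdsWithin_of_mem_nhds
      (continuous_snd.continuousAt.eventually (gt_mem_nhds (lt_add_one q.2)))] with z hz hzq
      using hC z ⟨hz.1, le_of_lt hzq⟩
  have hmax (ε : ℝ) (hε : 0 < ε) (q : EuclideanSpace ℝ (Fin m) × ℝ)
      (hq : q ∈ Ω ∩ {q | u q < 0}) (hpos : 0 < q.2) : ¬ ∀ᶠ z in 𝓝 q, z.2 ≤ q.2 →
        gradFn u z.1 z.2 * u z ^ 2 - ε * z.2 ≤ gradFn u q.1 q.2 * u q ^ 2 - ε * q.2 := by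
    have hnhds := (isOpen_inter_time_pos hΩ).mem_nhds ⟨hq.1, hpos⟩
    exact not_backward_max_gradFn_mul_sq_sub (hu_C3.contDiffAt hnhds)
      (mem_of_superset hnhds fun z hz => hu_eq z hz.1 hz.2) hε
  simpa only [mem_inter_iff, mem_ofPred_eq, and_assoc] using
    le_sSup_initial_of_not_backward_max (exists_isOpen_inter_neg_eq hΩ hu_C1.continuousOn)
      (fun T hT => (hΩ_bdd T hT).subset (inter_subset_inter_left _ inter_subset_left)) hw
      (fun q _ => mul_nonneg (Real.sqrt_nonneg _) (sq_nonneg _)) hw_zero hmax ⟨hp, hneg⟩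

/-- **C¹-estimate.**  Under the a priori estimate assumption, at points where `u < 0`
one has `v u² ≤ sup_{t=0, {u<0}} v u²`, where `v = √(1+|Du|²)`. -/
theorem mcf_C1_estimate (n : ℕ) (hn : 1 ≤ n)
    (Ω : Set (EuclideanSpace ℝ (Fin (n + 1)) × ℝ))
    (u : EuclideanSpace ℝ (Fin (n + 1)) × ℝ → ℝ)
    -- Ω is relatively open in ℝ^{n+1} × [0,∞)
    (hΩ : ∃ U, IsOpen U ∧ Ω = U ∩ {p | 0 ≤ p.2})
    -- u is a smooth solution of graphical mean curvature flow on Ω ∩ (ℝ^{n+1} × (0,∞))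
    (hu_cont : ContinuousOn u Ω)
    (hu_smooth : ContDiffOn ℝ (⊤ : ℕ∞) u (Ω ∩ {p | 0 < p.2}))
    (hu_eq : ∀ p ∈ Ω, 0 < p.2 → mcfEqAt u p.1 p.2)
    -- u(x,t) → 0 as (x,t) approaches the relative boundary of Ω
    (hu_zero : ∀ p : EuclideanSpace ℝ (Fin (n + 1)) × ℝ,
      0 ≤ p.2 → p ∈ closure Ω → p ∉ Ω → Tendsto u (𝓝[Ω] p) (𝓝 0))
    -- all derivatives of u are uniformly bounded on Ω ∩ (ℝ^{n+1} × [0,T]) ...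
    (hu_deriv_bd : ∀ T > (0 : ℝ), ∀ k : ℕ, ∃ C : ℝ,
      ∀ p ∈ Ω ∩ {p : EuclideanSpace ℝ (Fin (n + 1)) × ℝ | p.2 ≤ T},
        ‖iteratedFDerivWithin ℝ k u Ω p‖ ≤ C)
    -- ... and extend continuously across the boundary of these sets
    (hu_deriv_ext : ∀ T > (0 : ℝ), ∀ k : ℕ,
      ∃ g : EuclideanSpace ℝ (Fin (n + 1)) × ℝ →
        (EuclideanSpace ℝ (Fin (n + 1)) × ℝ) [×k]→L[ℝ] ℝ,
        ContinuousOn g (closure (Ω ∩ {p | p.2 ≤ T})) ∧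
        ∀ p ∈ Ω ∩ {p : EuclideanSpace ℝ (Fin (n + 1)) × ℝ | p.2 ≤ T},
          g p = iteratedFDerivWithin ℝ k u Ω p)
    -- the sets Ω ∩ (ℝ^{n+1} × [0,T]) are bounded
    (hΩ_bdd : ∀ T > (0 : ℝ),
      Bornology.IsBounded (Ω ∩ {p : EuclideanSpace ℝ (Fin (n + 1)) × ℝ | p.2 ≤ T})) :
    ∀ p ∈ Ω, u p < 0 →
      gradFn u p.1 p.2 * (u p) ^ 2 ≤
        sSup {r : ℝ | ∃ y, (y, (0 : ℝ)) ∈ Ω ∧ u (y, 0) < 0 ∧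
          r = gradFn u y 0 * (u (y, 0)) ^ 2} := by
  have hu_C1 := contDiffOn_one_of_extends_iteratedFDerivWithin hΩ hu_cont
    (hu_smooth.differentiableOn (by simp)) fun T hT => hu_deriv_ext T hT 1
  exact mcf_C1_estimate_general hΩ hu_C1 (contDiffOn_infty.1 hu_smooth 3) hu_eq hu_zero
    (fun T hT => (hu_deriv_bd T hT 1).imp' _ fun _ hC p hp =>
      gradFn_le_of_norm_iteratedFDerivWithin_le hΩ (hu_C1.differentiableOn one_ne_zero) hp.1
        (hC p hp)) hΩ_bdd
end
end

section
/- Let n ≥ 1 and let u : ℝ^{n+1} × [0,∞) → ℝ be a smooth graphical solution to mean curvature flow, i.e. ∂u/∂t = √(1+|Du|²) · div( Du/√(1+|Du|²) ). Let M ≥ 1 be such that |Du(x,t)| ≤ M at all points (x,t) where u(x,t) ≤ 0. Fix x₀ ∈ ℝ^{n+1} and t₁, t₂ ≥ 0. If u(x₀,t₁) ≤ −1 or u(x₀,t₂) ≤ −1, then either |t₁ − t₂| ≥ 1/(8(n+1)M²), or |u(x₀,t₁) − u(x₀,t₂)| / √(|t₁ − t₂|) ≤ √(2(n+1)) · (M+1).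 -/
open Set Filter Topology Metric

noncomputable section

/-! The geometric input is that a graph moving by mean curvature avoids the sphere of radius
`√(R² - 2m(t - s))` shrinking about a fixed centre: at a first contact point, minimality of the
squared distance to the centre, contracted with the inverse metric of the graph, bounds the speed
of the graph by that of the sphere. Since `min u 0` is `M`-Lipschitz in space, and `(M + 1) R < 1`
keeps the graph over the `R`-ball around `x₀` negative when `u (x₀, s) ≤ -1`, spheres of radius `R`
whose centres lie `(M + 1) R` above and below the graph over `x₀` do not cross it at time `s`. If
`2m(t - s) ≤ R²`, they have not vanished before time `t`, and so they trap `u (x₀, ·)` between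
their centres. When only `u (x₀, t) ≤ -1` is known, the lower sphere already forces `u (x₀, s) ≤ 0`,
and the upper bound is trivial. -/

open Module (finrank)
open InnerProductSpace (rankOne toDual)
open scoped RealInnerProductSpace NNReal

section LocalMin

theorem deriv_deriv_nonneg_of_isLocalMin {φ : ℝ → ℝ} {a : ℝ} (hmin : IsLocalMin φ a)
    (hφ : ContinuousAt φ a) : 0 ≤ deriv (deriv φ) a := by
  by_contra! hneg
  have hmax : IsLocalMax φ a := isLocalMax_of_deriv_deriv_neg hneg hmin.deriv_eq_zero hφ
  have hconst : φ =ᶠ[𝓝 a] fun _ => φ a := by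
    filter_upwards [hmin, hmax] with r hr₁ hr₂ using le_antisymm hr₂ hr₁
  have hzero : deriv (deriv φ) a = 0 := by simpa using hconst.deriv.deriv_eq
  exact hneg.ne hzero

theorem hasDerivAt_nonpos_of_forall_Icc_le {φ : ℝ → ℝ} {φ' s t : ℝ} (hst : s < t)
    (hφ : HasDerivAt φ φ' t) (hmin : ∀ r ∈ Icc s t, φ t ≤ φ r) : φ' ≤ 0 := by
  have hcone : s - t ∈ posTangentConeAt (Icc s t) t :=
    mem_posTangentConeAt_of_segment_subset <| by
      rw [add_sub_cancel, segment_symm, segment_eq_Icc hst.le]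
  have h : 0 ≤ (s - t) * φ' := by
    have hmin' : IsMinOn φ (Icc s t) t := hmin
    simpa using hmin'.localize.hasFDerivWithinAt_nonneg hφ.hasFDerivAt.hasFDerivWithinAt hcone
  exact nonpos_of_mul_nonneg_right h (sub_neg.2 hst)

theorem inner_fderiv_gradient_nonneg_of_isLocalMin {E : Type*} [NormedAddCommGroup E]
    [InnerProductSpace ℝ E] [CompleteSpace E] {F : E → ℝ} {P : E → E} {B : E →L[ℝ] E} {x : E}
    (hmin : IsLocalMin F x) (hF : ∀ y, HasGradientAt F (P y) y) (hP : HasFDerivAt P B x) (e : E) :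
    0 ≤ ⟪B e, e⟫ := by
  have hline (r : ℝ) : HasDerivAt (fun r : ℝ => x + r • e) e r := by
    simpa using ((hasDerivAt_id r).smul_const e).const_add x
  have hfirst (r : ℝ) : HasDerivAt (fun r : ℝ => F (x + r • e)) ⟪P (x + r • e), e⟫ r := by
    simpa [Function.comp_def] using
      (hF (x + r • e)).hasFDerivAt.comp_hasDerivAt r (hline r)
  have hsecond : HasDerivAt (fun r : ℝ => ⟪P (x + r • e), e⟫) ⟪B e, e⟫ 0 := by
    have hP' : HasFDerivAt P B (x + (0 : ℝ) • e) := by simpa using hP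
    simpa [Function.comp_def] using
      (hP'.comp_hasDerivAt (0 : ℝ) (hline 0)).inner ℝ (hasDerivAt_const (0 : ℝ) e)
  have hmin₀ : IsLocalMin (fun r : ℝ => F (x + r • e)) 0 := by
    have hcont : Tendsto (fun r : ℝ => x + r • e) (𝓝 0) (𝓝 x) := by
      simpa using (hline 0).continuousAt.tendsto
    simpa [IsLocalMin, IsMinFilter] using hcont.eventually hmin
  have h := deriv_deriv_nonneg_of_isLocalMin hmin₀ (hfirst 0).continuousAt
  rwa [funext fun r => (hfirst r).deriv, hsecond.deriv] at h

end LocalMin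

section GraphTrace

variable {E : Type*} [NormedAddCommGroup E] [InnerProductSpace ℝ E]

/-- The contraction of `A` with the inverse metric `I - p pᵀ / (1 + |p|²)` of a graph with
gradient `p`. For `p = Du` and `A = D²u` it is the right-hand side of the mean curvature flow
equation in non-divergence form. -/
def graphTrace (p : E) (A : E →L[ℝ] E) : ℝ :=
  LinearMap.trace ℝ E A - ⟪A p, p⟫ / (1 + ‖p‖ ^ 2)

theorem inner_le_norm_sq_mul_trace [FiniteDimensional ℝ E] {B : E →L[ℝ] E}
    (hB : ∀ e, 0 ≤ ⟪B e, e⟫) (p : E) :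
    ⟪B p, p⟫ ≤ ‖p‖ ^ 2 * LinearMap.trace ℝ E B := by
  rcases eq_or_ne p 0 with rfl | hp
  · simp
  have hp' : ‖p‖ ≠ 0 := norm_ne_zero_iff.2 hp
  set v : E := ‖p‖⁻¹ • p with hv
  have hvp : p = ‖p‖ • v := by rw [hv, smul_inv_smul₀ hp']
  have hunit : ‖v‖ = 1 := by rw [hv, norm_smul, norm_inv, norm_norm, inv_mul_cancel₀ hp']
  have horth : Orthonormal ℝ ((↑) : ({v} : Set E) → E) :=
    ⟨by simpa using hunit, fun i j hij => (hij (Subsingleton.elim i j)).elim⟩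
  obtain ⟨w, b, hvw, hb⟩ := horth.exists_orthonormalBasis_extension
  have hle : ⟪B v, v⟫ ≤ LinearMap.trace ℝ E B := by
    rw [LinearMap.trace_eq_sum_inner _ b]
    have hterm := Finset.single_le_sum (f := fun i => ⟪b i, B (b i)⟫)
      (fun i _ => (real_inner_comm (b i) _).symm ▸ hB (b i))
      (Finset.mem_univ (⟨v, hvw rfl⟩ : w))
    simpa [hb, real_inner_comm v] using hterm
  calc ⟪B p, p⟫ = ‖p‖ ^ 2 * ⟪B v, v⟫ := by
        rw [hvp, map_smul, real_inner_smul_left, real_inner_smul_right, ← hvp]; ring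
    _ ≤ ‖p‖ ^ 2 * LinearMap.trace ℝ E B := by gcongr

theorem graphTrace_nonneg [FiniteDimensional ℝ E] {B : E →L[ℝ] E}
    (hB : ∀ e, 0 ≤ ⟪B e, e⟫) (p : E) : 0 ≤ graphTrace p B := by
  have htrace : 0 ≤ LinearMap.trace ℝ E B := by
    rw [LinearMap.trace_eq_sum_inner _ (stdOrthonormalBasis ℝ E)]
    exact Finset.sum_nonneg fun i _ => by simpa [real_inner_comm] using hB _
  rw [graphTrace, sub_nonneg, div_le_iff₀ (by positivity)]
  linarith [inner_le_norm_sq_mul_trace hB p]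

theorem graphTrace_id_add_rankOne_add_smul [FiniteDimensional ℝ E] (p : E) (w : ℝ)
    (A : E →L[ℝ] E) :
    graphTrace p (.id ℝ E + rankOne ℝ p p + w • A) = finrank ℝ E + w * graphTrace p A := by
  simp only [graphTrace, ContinuousLinearMap.toLinearMap_add, ContinuousLinearMap.toLinearMap_smul,
    ContinuousLinearMap.coe_id, map_add, map_smul, LinearMap.trace_id,
    InnerProductSpace.trace_rankOne, add_apply, smul_apply, ContinuousLinearMap.id_apply,
    InnerProductSpace.rankOne_apply, inner_add_left, real_inner_smul_left,
    real_inner_self_eq_norm_sq, smul_eq_mul]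
  field_simp
  ring

theorem vecDiv_eq_trace {m : ℕ} (X : EuclideanSpace ℝ (Fin m) → EuclideanSpace ℝ (Fin m))
    (x : EuclideanSpace ℝ (Fin m)) :
    vecDiv X x = LinearMap.trace ℝ (EuclideanSpace ℝ (Fin m)) (fderiv ℝ X x) := by
  simp [vecDiv, LinearMap.trace_eq_sum_inner _ (EuclideanSpace.basisFun (Fin m) ℝ),
    EuclideanSpace.inner_single_left]

theorem sqrt_mul_vecDiv_eq_graphTrace {m : ℕ}
    {g : EuclideanSpace ℝ (Fin m) → EuclideanSpace ℝ (Fin m)}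
    {A : EuclideanSpace ℝ (Fin m) →L[ℝ] EuclideanSpace ℝ (Fin m)} {x : EuclideanSpace ℝ (Fin m)}
    (hg : HasFDerivAt g A x) :
    √(1 + ‖g x‖ ^ 2) * vecDiv (fun y => (√(1 + ‖g y‖ ^ 2))⁻¹ • g y) x = graphTrace (g x) A := by
  have hpos : 0 < 1 + ‖g x‖ ^ 2 := by positivity
  have hs : 0 < √(1 + ‖g x‖ ^ 2) := Real.sqrt_pos.2 hpos
  have hsq : √(1 + ‖g x‖ ^ 2) ^ 2 = 1 + ‖g x‖ ^ 2 := Real.sq_sqrt hpos.le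
  have hinv : HasFDerivAt (fun y => (√(1 + ‖g y‖ ^ 2))⁻¹) _ x :=
    (hasDerivAt_inv hs.ne').comp_hasFDerivAt x ((hg.norm_sq.const_add 1).sqrt hpos.ne')
  rw [vecDiv_eq_trace, (hinv.fun_smul hg).fderiv, graphTrace, ← hsq]
  simp only [Real.sqrt_nonneg, Real.sqrt_sq, one_div, mul_inv_rev, neg_smul,
    ContinuousLinearMap.toLinearMap_add, ContinuousLinearMap.toLinearMap_smul,
    ContinuousLinearMap.coe_smulRight, ContinuousLinearMap.toLinearMap_neg,
    ContinuousLinearMap.toLinearMap_comp, ContinuousLinearMap.toLinearMap_innerSL_apply, map_add,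
    map_smul, smul_eq_mul, LinearMap.trace_smulRight, LinearMap.neg_apply, LinearMap.smul_apply,
    LinearMap.coe_comp, coe_innerₛₗ_apply, ContinuousLinearMap.coe_coe, Function.comp_apply,
    nsmul_eq_mul, Nat.cast_ofNat, real_inner_comm (g x)]
  field_simp
  ring

end GraphTrace

section DistanceToPoint

variable {E : Type*} [NormedAddCommGroup E] [InnerProductSpace ℝ E] [CompleteSpace E]

theorem hasGradientAt_norm_sub_sq_add_sub_sq {f : E → ℝ} {p x : E} (hf : HasGradientAt f p x)
    (x₀ : E) (c : ℝ) :
    HasGradientAt (fun y => ‖y - x₀‖ ^ 2 + (f y - c) ^ 2)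
      ((2 : ℝ) • (x - x₀ + (f x - c) • p)) x := by
  have hhor := ((hasFDerivAt_id x).sub_const x₀).norm_sq
  have hver := (hf.hasFDerivAt.sub_const c).pow 2
  rw [hasGradientAt_iff_hasFDerivAt]
  refine (hhor.add hver).congr_fderiv ?_
  ext e
  simp only [id_eq, map_sub, ContinuousLinearMap.comp_id, Nat.add_one_sub_one, pow_one,
    nsmul_eq_mul, Nat.cast_ofNat, add_apply, smul_apply, sub_apply, coe_innerSL_apply,
    InnerProductSpace.toDual_apply_apply, smul_eq_mul, smul_add, map_add, map_smul]
  ring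

theorem hasFDerivAt_two_smul_sub_add_smul_gradient {f : E → ℝ} {g : E → E} {A : E →L[ℝ] E} {x : E}
    (hf : HasGradientAt f (g x) x) (hg : HasFDerivAt g A x) (x₀ : E) (c : ℝ) :
    HasFDerivAt (fun y => (2 : ℝ) • (y - x₀ + (f y - c) • g y))
      ((2 : ℝ) • (.id ℝ E + rankOne ℝ (g x) (g x) + (f x - c) • A)) x := by
  refine (((hasFDerivAt_id x).sub_const x₀).add
    ((hf.hasFDerivAt.sub_const c).smul hg)).const_smul (2 : ℝ) |>.congr_fderiv ?_
  ext e
  simp [add_assoc, add_comm]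

theorem neg_finrank_le_mul_graphTrace_of_isLocalMin [FiniteDimensional ℝ E] {f : E → ℝ} {g : E → E}
    {A : E →L[ℝ] E} {x x₀ : E} {c : ℝ} (hf : ∀ y, HasGradientAt f (g y) y)
    (hg : HasFDerivAt g A x) (hmin : IsLocalMin (fun y => ‖y - x₀‖ ^ 2 + (f y - c) ^ 2) x) :
    -(finrank ℝ E : ℝ) ≤ (f x - c) * graphTrace (g x) A := by
  have hpsd (e : E) : 0 ≤ ⟪(.id ℝ E + rankOne ℝ (g x) (g x) + (f x - c) • A) e, e⟫ := by
    have h := inner_fderiv_gradient_nonneg_of_isLocalMin hmin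
      (fun y => hasGradientAt_norm_sub_sq_add_sub_sq (hf y) x₀ c)
      (hasFDerivAt_two_smul_sub_add_smul_gradient (hf x) hg x₀ c) e
    rw [smul_apply, real_inner_smul_left] at h
    exact nonneg_of_mul_nonneg_right h two_pos
  have h := graphTrace_nonneg hpsd (g x)
  rw [graphTrace_id_add_rankOne_add_smul] at h
  linarith

end DistanceToPoint

theorem exists_forall_le_of_lt_initial {X : Type*} [TopologicalSpace X] {G : X × ℝ → ℝ}
    {s t ρ : ℝ} {K : Set X} {x : X} (hK : IsCompact K) (hG : ContinuousOn G (univ ×ˢ Icc s t))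
    (hinit : ∀ y, ρ ≤ G (y, s)) (hfar : ∀ y ∉ K, ∀ r ∈ Icc s t, ρ ≤ G (y, r))
    (hst : s ≤ t) (hx : G (x, t) < ρ) :
    ∃ y, ∃ r ∈ Ioc s t, ∀ z, ∀ q ∈ Icc s t, G (y, r) ≤ G (z, q) := by
  have hxK : x ∈ K := by
    by_contra hxK
    exact (hfar x hxK t (right_mem_Icc.2 hst)).not_gt hx
  have hxt : (x, t) ∈ K ×ˢ Icc s t := ⟨hxK, right_mem_Icc.2 hst⟩
  obtain ⟨⟨y, r⟩, hyr, hmin⟩ := (hK.prod isCompact_Icc).exists_isMinOn ⟨_, hxt⟩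
    (hG.mono (prod_mono_left (subset_univ K)))
  have hlt : G (y, r) < ρ := (hmin hxt).trans_lt hx
  refine ⟨y, r, ⟨hyr.2.1.lt_of_ne ?_, hyr.2.2⟩, fun z q hq => ?_⟩
  · rintro rfl
    exact (hinit y).not_gt hlt
  · by_cases hz : z ∈ K
    · exact hmin ⟨hz, hq⟩
    · exact hlt.le.trans (hfar z hz q hq)

section Lipschitz

variable {E : Type*} [NormedAddCommGroup E]

theorem exists_mem_segment_forall_le [NormedSpace ℝ E] {f : E → ℝ} (hf : Continuous f) {x y : E}
    {a : ℝ} (hx : a ≤ f x) (hy : f y ≤ a) :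
    ∃ z ∈ segment ℝ x y, a ≤ f z ∧ ∀ w ∈ segment ℝ z y, f w ≤ a := by
  have hcompact : IsCompact (segment ℝ x y ∩ {w | a ≤ f w}) := by
    rw [segment_eq_image_lineMap]
    exact (isCompact_Icc.image AffineMap.lineMap_continuous).inter_right
      (isClosed_le continuous_const hf)
  obtain ⟨z, ⟨hz, haz⟩, hmin⟩ := hcompact.exists_isMinOn ⟨x, left_mem_segment ℝ x y, hx⟩
    (continuous_id.dist continuous_const : Continuous fun w => dist w y).continuousOn
  refine ⟨z, hz, haz, ?_⟩
  have hopen : ∀ w ∈ openSegment ℝ z y, f w ≤ a := fun w hw => by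
    by_contra! haw
    have hwxy : w ∈ segment ℝ x y := (convex_segment x y).segment_subset hz
      (right_mem_segment ℝ x y) (openSegment_subset_segment ℝ z y hw)
    have hle : dist z y ≤ dist w y := hmin ⟨hwxy, haw.le⟩
    rw [openSegment_eq_image_lineMap] at hw
    obtain ⟨θ, hθ, rfl⟩ := hw
    rw [dist_lineMap_right, Real.norm_of_nonneg (sub_nonneg.2 hθ.2.le)] at hle
    have hzy : z = y := dist_le_zero.1 (by nlinarith [hθ.1])
    rw [hzy, AffineMap.lineMap_same_apply] at haw
    exact haw.not_ge hy
  intro w hw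
  rw [← closure_openSegment] at hw
  exact closure_minimal hopen (isClosed_le hf continuous_const) hw

theorem lipschitzWith_min_of_norm_gradient_le [InnerProductSpace ℝ E] [CompleteSpace E] {f : E → ℝ}
    {g : E → E} {M : ℝ≥0} {b : ℝ} (hf : ∀ y, HasGradientAt f (g y) y)
    (hg : ∀ y, f y ≤ b → ‖g y‖ ≤ M) : LipschitzWith M fun x => min (f x) b := by
  refine LipschitzWith.of_le_add_mul M fun x y => ?_
  rcases le_total (min (f x) b) (min (f y) b) with hle | hle
  · exact hle.trans (le_add_of_nonneg_right (by positivity))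
  rcases le_total b (f y) with hby | hyb
  · rw [min_eq_right hby]
    exact (min_le_right _ _).trans (le_add_of_nonneg_right (by positivity))
  rw [min_eq_left hyb] at hle ⊢
  obtain ⟨z, hz, haz, hzy⟩ := exists_mem_segment_forall_le
    (continuous_iff_continuousAt.2 fun y => (hf y).continuousAt) (min_le_left (f x) b) hle
  have hmvt : ‖f z - f y‖ ≤ M * ‖z - y‖ :=
    (convex_segment z y).norm_image_sub_le_of_norm_hasFDerivWithin_le
      (fun w _ => (hf w).hasFDerivAt.hasFDerivWithinAt)
      (fun w hw => by simpa using hg w ((hzy w hw).trans (min_le_right _ _)))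
      (right_mem_segment ℝ z y) (left_mem_segment ℝ z y)
  calc min (f x) b ≤ f z := haz
    _ ≤ f y + M * dist z y := by
        rw [dist_eq_norm]
        linarith [(le_abs_self _).trans hmvt]
    _ ≤ f y + M * dist x y := by
        gcongr
        linarith [dist_add_dist_of_mem_segment hz, dist_nonneg (x := x) (y := z)]

end Lipschitz

/-- A classical entire graphical solution of mean curvature flow: continuous up to the initial
time, and of class `C²` in space, differentiable in time and solving the equation afterwards. -/
structure IsGraphicalMCF {m : ℕ} (u : EuclideanSpace ℝ (Fin m) × ℝ → ℝ) : Prop where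
  continuousOn : ContinuousOn u {p | 0 ≤ p.2}
  contDiff_slice : ∀ t, 0 < t → ContDiff ℝ 2 fun x => u (x, t)
  differentiableAt_time : ∀ x t, 0 < t → DifferentiableAt ℝ (fun r => u (x, r)) t
  equation : ∀ x t, 0 < t → mcfEqAt u x t

namespace IsGraphicalMCF

variable {m : ℕ} {u : EuclideanSpace ℝ (Fin m) × ℝ → ℝ} {x₀ : EuclideanSpace ℝ (Fin m)}
  {s t c R : ℝ}

theorem of_contDiffOn
    (hu : ContDiffOn ℝ (⊤ : ℕ∞) u {p : EuclideanSpace ℝ (Fin m) × ℝ | 0 ≤ p.2})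
    (heq : ∀ (x : EuclideanSpace ℝ (Fin m)) (t : ℝ), 0 < t → mcfEqAt u x t) :
    IsGraphicalMCF u where
  continuousOn := hu.continuousOn
  contDiff_slice t ht :=
    (hu.of_le (WithTop.coe_le_coe.2 le_top)).comp_contDiff (contDiff_id.prodMk contDiff_const)
      fun _ => ht.le
  differentiableAt_time x t ht := by
    have hmem : {p : EuclideanSpace ℝ (Fin m) × ℝ | 0 ≤ p.2} ∈ 𝓝 (x, t) :=
      continuous_snd.continuousAt.preimage_mem_nhds (Ici_mem_nhds ht)
    exact ((hu.contDiffAt hmem).differentiableAt (by simp)).comp t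
      ((differentiableAt_const x).prodMk differentiableAt_id)
  equation := heq

theorem hasGradientAt (hu : IsGraphicalMCF u) (ht : 0 < t) (x : EuclideanSpace ℝ (Fin m)) :
    HasGradientAt (fun y => u (y, t)) (spatialGrad u x t) x :=
  ((hu.contDiff_slice t ht).differentiable (by simp) x).hasGradientAt

theorem differentiable_spatialGrad (hu : IsGraphicalMCF u) (ht : 0 < t) :
    Differentiable ℝ fun y => spatialGrad u y t := by
  have h : ContDiff ℝ 1 (fderiv ℝ fun y => u (y, t)) :=
    (hu.contDiff_slice t ht).fderiv_right (by norm_num)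
  exact ((toDual ℝ _).symm.toContinuousLinearEquiv.differentiable).comp
    (h.differentiable (by simp))

theorem continuousOn_time (hu : IsGraphicalMCF u) (x : EuclideanSpace ℝ (Fin m)) :
    ContinuousOn (fun r => u (x, r)) (Ici 0) :=
  hu.continuousOn.comp (by fun_prop) fun _ hr => hr

theorem neg_dim_le_mul_deriv_of_isLocalMin (hu : IsGraphicalMCF u) (ht : 0 < t)
    {x : EuclideanSpace ℝ (Fin m)}
    (hmin : IsLocalMin (fun y => ‖y - x₀‖ ^ 2 + (u (y, t) - c) ^ 2) x) :
    -(m : ℝ) ≤ (u (x, t) - c) * deriv (fun r => u (x, r)) t := by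
  have hgrad := (hu.differentiable_spatialGrad ht x).hasFDerivAt
  have hspeed : deriv (fun r => u (x, r)) t =
      graphTrace (spatialGrad u x t) (fderiv ℝ (fun y => spatialGrad u y t) x) :=
    (hu.equation x t ht).trans (sqrt_mul_vecDiv_eq_graphTrace hgrad)
  rw [hspeed]
  simpa only [finrank_euclideanSpace_fin] using
    neg_finrank_le_mul_graphTrace_of_isLocalMin (hu.hasGradientAt ht) hgrad hmin

-- Shrinking the sphere slightly too fast makes the inequality at a first contact strict.
theorem sq_le_of_two_mul_dim_lt (hu : IsGraphicalMCF u) (hs : 0 ≤ s)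
    (hinit : ∀ x, R ^ 2 ≤ ‖x - x₀‖ ^ 2 + (u (x, s) - c) ^ 2) (hst : s ≤ t) {κ : ℝ}
    (hκ : 2 * m < κ) (x : EuclideanSpace ℝ (Fin m)) :
    R ^ 2 ≤ ‖x - x₀‖ ^ 2 + (u (x, t) - c) ^ 2 + κ * (t - s) := by
  set G : EuclideanSpace ℝ (Fin m) × ℝ → ℝ := fun p =>
    ‖p.1 - x₀‖ ^ 2 + (u p - c) ^ 2 + κ * (p.2 - s) with hG
  have hκ₀ : 0 < κ := lt_of_le_of_lt (by positivity) hκ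
  have hcont : ContinuousOn G (univ ×ˢ Icc s t) := by
    have hu' : ContinuousOn u (univ ×ˢ Icc s t) :=
      hu.continuousOn.mono fun p hp => hs.trans hp.2.1
    fun_prop
  have hfar : ∀ y ∉ closedBall x₀ |R|, ∀ r ∈ Icc s t, R ^ 2 ≤ G (y, r) := fun y hy r hr => by
    rw [mem_closedBall, not_le, dist_eq_norm] at hy
    have hsq : R ^ 2 ≤ ‖y - x₀‖ ^ 2 := sq_le_sq.2 (hy.le.trans (le_abs_self _))
    have hdrift : 0 ≤ κ * (r - s) := mul_nonneg hκ₀.le (sub_nonneg.2 hr.1)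
    simp only [hG]
    linarith [sq_nonneg (u (y, r) - c)]
  by_contra! hlt
  obtain ⟨y, r, hr, hmin⟩ := exists_forall_le_of_lt_initial (G := G)
    (isCompact_closedBall x₀ |R|) hcont (by simpa [hG] using hinit) hfar hst hlt
  have hr₀ : 0 < r := hs.trans_lt hr.1
  have hspace : -(m : ℝ) ≤ (u (y, r) - c) * deriv (fun q => u (y, q)) r :=
    hu.neg_dim_le_mul_deriv_of_isLocalMin (x₀ := x₀) hr₀
      (.of_forall fun z => by simpa [hG] using hmin z r ⟨hr.1.le, hr.2⟩)
  have hderiv : HasDerivAt (fun q => G (y, q))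
      (2 * (u (y, r) - c) * deriv (fun q => u (y, q)) r + κ) r := by
    have hheight := ((hu.differentiableAt_time y r hr₀).hasDerivAt.sub_const c).pow 2
    have hdrift := ((hasDerivAt_id r).sub_const s).const_mul κ
    simpa [hG, Pi.add_def] using (hheight.const_add (‖y - x₀‖ ^ 2)).add hdrift
  have htime := hasDerivAt_nonpos_of_forall_Icc_le hr.1 hderiv
    fun q hq => hmin y q ⟨hq.1, hq.2.trans hr.2⟩
  linarith

theorem sphere_avoidance (hu : IsGraphicalMCF u) (hs : 0 ≤ s)
    (hinit : ∀ x, R ^ 2 ≤ ‖x - x₀‖ ^ 2 + (u (x, s) - c) ^ 2) (hst : s ≤ t)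
    (x : EuclideanSpace ℝ (Fin m)) :
    R ^ 2 ≤ ‖x - x₀‖ ^ 2 + (u (x, t) - c) ^ 2 + 2 * m * (t - s) := by
  have hlim : Tendsto (fun κ : ℝ => ‖x - x₀‖ ^ 2 + (u (x, t) - c) ^ 2 + κ * (t - s))
      (𝓝[>] (2 * m)) (𝓝 (‖x - x₀‖ ^ 2 + (u (x, t) - c) ^ 2 + 2 * m * (t - s))) :=
    (Continuous.tendsto (by fun_prop) _).mono_left nhdsWithin_le_nhds
  exact ge_of_tendsto hlim <| eventually_mem_nhdsWithin.mono fun κ hκ =>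
    hu.sq_le_of_two_mul_dim_lt hs hinit hst hκ x

theorem ne_center_of_avoids_sphere (hu : IsGraphicalMCF u) (hm : 0 < m) (hs : 0 ≤ s)
    (hinit : ∀ x, R ^ 2 ≤ ‖x - x₀‖ ^ 2 + (u (x, s) - c) ^ 2) (ht : 2 * m * (t - s) ≤ R ^ 2) :
    ∀ r ∈ Ico s t, u (x₀, r) ≠ c := by
  rintro r hr rfl
  have hle : R ^ 2 ≤ 2 * m * (r - s) := by
    simpa using hu.sphere_avoidance hs hinit hr.1 x₀
  have hlt : 2 * m * (r - s) < 2 * m * (t - s) := by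
    have := hr.2
    gcongr
  linarith

theorem center_le_of_sphere_below (hu : IsGraphicalMCF u) (hm : 0 < m) (hs : 0 ≤ s) (hst : s ≤ t)
    (hR : 0 ≤ R) (ht : 2 * m * (t - s) ≤ R ^ 2) (hbelow : ∀ x, ‖x - x₀‖ ≤ R → c + R ≤ u (x, s)) :
    c ≤ u (x₀, t) := by
  have hinit (x) : R ^ 2 ≤ ‖x - x₀‖ ^ 2 + (u (x, s) - c) ^ 2 := by
    rcases le_total ‖x - x₀‖ R with hx | hx
    · nlinarith [hbelow x hx, sq_nonneg ‖x - x₀‖]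
    · nlinarith [sq_nonneg (u (x, s) - c)]
  have hc : c ≤ u (x₀, s) := by linarith [hbelow x₀ (by simpa using hR)]
  by_contra! hlt
  obtain ⟨r, hr, hrc⟩ := intermediate_value_Ico' hst
    ((hu.continuousOn_time x₀).mono fun r hr => hs.trans hr.1) ⟨hlt, hc⟩
  exact hu.ne_center_of_avoids_sphere hm hs hinit ht r hr hrc

theorem le_center_of_sphere_above (hu : IsGraphicalMCF u) (hm : 0 < m) (hs : 0 ≤ s) (hst : s ≤ t)
    (hR : 0 ≤ R) (ht : 2 * m * (t - s) ≤ R ^ 2) (habove : ∀ x, ‖x - x₀‖ ≤ R → u (x, s) ≤ c - R) :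
    u (x₀, t) ≤ c := by
  have hinit (x) : R ^ 2 ≤ ‖x - x₀‖ ^ 2 + (u (x, s) - c) ^ 2 := by
    rcases le_total ‖x - x₀‖ R with hx | hx
    · nlinarith [habove x hx, sq_nonneg ‖x - x₀‖]
    · nlinarith [sq_nonneg (u (x, s) - c)]
  have hc : u (x₀, s) ≤ c := by linarith [habove x₀ (by simpa using hR)]
  by_contra! hlt
  obtain ⟨r, hr, hrc⟩ := intermediate_value_Ico hst
    ((hu.continuousOn_time x₀).mono fun r hr => hs.trans hr.1) ⟨hc, hlt⟩
  exact hu.ne_center_of_avoids_sphere hm hs hinit ht r hr hrc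

theorem lipschitzWith_min (hu : IsGraphicalMCF u) {M : ℝ≥0} {b : ℝ}
    (hgrad : ∀ x t, 0 < t → u (x, t) ≤ b → ‖spatialGrad u x t‖ ≤ M) (hs : 0 ≤ s) :
    LipschitzWith M fun x => min (u (x, s)) b := by
  have hlim : Tendsto (fun r x => min (u (x, r)) b) (𝓝[>] s) (𝓝 fun x => min (u (x, s)) b) :=
    tendsto_pi_nhds.2 fun x => Tendsto.min
      ((hu.continuousOn_time x s hs).mono_left
        (nhdsWithin_mono s fun r hr => hs.trans (le_of_lt hr))) tendsto_const_nhds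
  exact (isClosed_setOfPred_lipschitzWith M).mem_of_tendsto hlim <|
    eventually_mem_nhdsWithin.mono fun r hr =>
      lipschitzWith_min_of_norm_gradient_le (hu.hasGradientAt (hs.trans_lt hr))
        fun x hx => hgrad x r (hs.trans_lt hr) hx

theorem min_sub_mul_le (hu : IsGraphicalMCF u) (hm : 0 < m) (hs : 0 ≤ s) (hst : s ≤ t)
    {M : ℝ≥0} {b : ℝ} (hlip : LipschitzWith M fun x => min (u (x, s)) b) (hR : 0 ≤ R)
    (ht : 2 * m * (t - s) ≤ R ^ 2) : min (u (x₀, s)) b - (M + 1) * R ≤ u (x₀, t) := by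
  refine hu.center_le_of_sphere_below hm hs hst hR ht fun x hx => ?_
  calc min (u (x₀, s)) b - (M + 1) * R + R
      = min (u (x₀, s)) b - M * R := by ring
    _ ≤ min (u (x₀, s)) b - M * dist x₀ x := by rw [dist_comm, dist_eq_norm]; gcongr
    _ ≤ min (u (x, s)) b := sub_le_iff_le_add.2 (hlip.le_add_mul x₀ x)
    _ ≤ u (x, s) := min_le_left _ _

theorem le_add_mul_of_add_mul_lt (hu : IsGraphicalMCF u) (hm : 0 < m) (hs : 0 ≤ s) (hst : s ≤ t)
    {M : ℝ≥0} {b : ℝ} (hlip : LipschitzWith M fun x => min (u (x, s)) b) (hR : 0 ≤ R)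
    (ht : 2 * m * (t - s) ≤ R ^ 2) (hb : u (x₀, s) + M * R < b) :
    u (x₀, t) ≤ u (x₀, s) + (M + 1) * R := by
  refine hu.le_center_of_sphere_above hm hs hst hR ht fun x hx => ?_
  have hmin : min (u (x, s)) b ≤ u (x₀, s) + M * R :=
    calc min (u (x, s)) b ≤ min (u (x₀, s)) b + M * dist x x₀ := hlip.le_add_mul x x₀
      _ ≤ u (x₀, s) + M * R := by rw [dist_eq_norm]; gcongr; exact min_le_left _ _
  have hu_le : u (x, s) ≤ u (x₀, s) + M * R :=
    (min_le_iff.1 hmin).resolve_right (not_le.2 hb)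
  linarith

theorem abs_sub_le (hu : IsGraphicalMCF u) (hm : 0 < m) (hs : 0 ≤ s) (hst : s ≤ t) {M : ℝ≥0}
    (hlip : LipschitzWith M fun x => min (u (x, s)) 0) (hR : 0 ≤ R)
    (ht : 2 * m * (t - s) ≤ R ^ 2) (hMR : (M + 1) * R < 1)
    (hneg : u (x₀, s) ≤ -1 ∨ u (x₀, t) ≤ -1) :
    |u (x₀, s) - u (x₀, t)| ≤ (M + 1) * R := by
  have hlower : min (u (x₀, s)) 0 - (M + 1) * R ≤ u (x₀, t) :=
    hu.min_sub_mul_le hm hs hst hlip hR ht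
  have hneg_s : u (x₀, s) ≤ 0 := by
    by_contra! hpos
    rw [min_eq_right hpos.le] at hlower
    rcases hneg with h | h <;> linarith
  rw [min_eq_left hneg_s] at hlower
  have hupper : u (x₀, t) ≤ u (x₀, s) + (M + 1) * R := by
    rcases le_or_gt (u (x₀, s)) (-1) with h | h
    · exact hu.le_add_mul_of_add_mul_lt hm hs hst hlip hR ht (by linarith)
    · linarith [hneg.resolve_left h.not_ge, mul_nonneg (by positivity : (0 : ℝ) ≤ M + 1) hR]
  exact abs_le.2 ⟨by linarith, by linarith⟩

end IsGraphicalMCF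

theorem add_one_mul_sqrt_lt_one {d M τ : ℝ} (hd : 0 < d) (hM : 1 ≤ M)
    (hτ : τ < 1 / (8 * d * M ^ 2)) : (M + 1) * √(2 * d * τ) < 1 := by
  have hsqrt : √(2 * d * τ) < 1 / (2 * M) := by
    rw [Real.sqrt_lt' (by positivity)]
    calc 2 * d * τ < 2 * d * (1 / (8 * d * M ^ 2)) := by gcongr
      _ = (1 / (2 * M)) ^ 2 := by field_simp; norm_num
  calc (M + 1) * √(2 * d * τ) < (M + 1) * (1 / (2 * M)) := by gcongr
    _ ≤ 1 := by rw [mul_one_div, div_le_one (by positivity)]; linarith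

theorem mcf_holder_in_time_general (n : ℕ) (u : EuclideanSpace ℝ (Fin (n + 1)) × ℝ → ℝ)
    (hu : IsGraphicalMCF u) (M : ℝ) (hM : 1 ≤ M)
    (hgrad : ∀ (x : EuclideanSpace ℝ (Fin (n + 1))) (t : ℝ), 0 < t → u (x, t) ≤ 0 →
      ‖spatialGrad u x t‖ ≤ M)
    (x₀ : EuclideanSpace ℝ (Fin (n + 1))) (t₁ t₂ : ℝ) (ht₁ : 0 ≤ t₁) (ht₂ : 0 ≤ t₂)
    (hneg : u (x₀, t₁) ≤ -1 ∨ u (x₀, t₂) ≤ -1) :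
    1 / (8 * (n + 1) * M ^ 2) ≤ |t₁ - t₂| ∨
      |u (x₀, t₁) - u (x₀, t₂)| ≤
        Real.sqrt (2 * (n + 1)) * (M + 1) * Real.sqrt |t₁ - t₂| := by
  wlog hle : t₁ ≤ t₂ generalizing t₁ t₂
  · simpa only [abs_sub_comm] using this t₂ t₁ ht₂ ht₁ hneg.symm (le_of_not_ge hle)
  refine or_iff_not_imp_left.2 fun hclose => ?_
  lift M to ℝ≥0 using zero_le_one.trans hM
  have hn : (0 : ℝ) < n + 1 := by positivity
  have hτ : |t₁ - t₂| = t₂ - t₁ := by rw [abs_sub_comm, abs_of_nonneg (sub_nonneg.2 hle)]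
  have hR : 2 * ((n + 1 : ℕ) : ℝ) * (t₂ - t₁) ≤ √(2 * (n + 1) * |t₁ - t₂|) ^ 2 := by
    rw [Real.sq_sqrt (by positivity), hτ, Nat.cast_succ]
  calc |u (x₀, t₁) - u (x₀, t₂)| ≤ (M + 1) * √(2 * (n + 1) * |t₁ - t₂|) :=
        hu.abs_sub_le n.succ_pos ht₁ hle (hu.lipschitzWith_min hgrad ht₁) (Real.sqrt_nonneg _) hR
          (add_one_mul_sqrt_lt_one hn hM (not_le.1 hclose)) hneg
    _ = √(2 * (n + 1)) * (M + 1) * √|t₁ - t₂| := by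
        rw [Real.sqrt_mul (by positivity)]; ring

/-- **Hölder estimate in time.**  Let `u : ℝ^{n+1} × [0,∞) → ℝ` be a smooth graphical
solution to mean curvature flow and `M ≥ 1` with `|Du(x,t)| ≤ M` wherever `u(x,t) ≤ 0`.
If `u(x₀,t₁) ≤ -1` or `u(x₀,t₂) ≤ -1`, then `|t₁-t₂| ≥ 1/(8(n+1)M²)` or
`|u(x₀,t₁) - u(x₀,t₂)| ≤ √(2(n+1))·(M+1)·√|t₁-t₂|`. -/
theorem mcf_holder_in_time (n : ℕ) (hn : 1 ≤ n)
    (u : EuclideanSpace ℝ (Fin (n + 1)) × ℝ → ℝ)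
    -- u is a smooth graphical solution to mean curvature flow on ℝ^{n+1} × [0,∞)
    (hu_smooth : ContDiffOn ℝ (⊤ : ℕ∞) u {p : EuclideanSpace ℝ (Fin (n + 1)) × ℝ | 0 ≤ p.2})
    (hu_eq : ∀ (x : EuclideanSpace ℝ (Fin (n + 1))) (t : ℝ), 0 < t → mcfEqAt u x t)
    (M : ℝ) (hM : 1 ≤ M)
    -- |Du(x,t)| ≤ M at all points where u(x,t) ≤ 0
    (hgrad : ∀ (x : EuclideanSpace ℝ (Fin (n + 1))) (t : ℝ), 0 ≤ t → u (x, t) ≤ 0 →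
      ‖spatialGrad u x t‖ ≤ M)
    (x₀ : EuclideanSpace ℝ (Fin (n + 1))) (t₁ t₂ : ℝ) (ht₁ : 0 ≤ t₁) (ht₂ : 0 ≤ t₂)
    (hneg : u (x₀, t₁) ≤ -1 ∨ u (x₀, t₂) ≤ -1) :
    1 / (8 * (n + 1) * M ^ 2) ≤ |t₁ - t₂| ∨
      |u (x₀, t₁) - u (x₀, t₂)| ≤
        Real.sqrt (2 * (n + 1)) * (M + 1) * Real.sqrt |t₁ - t₂| :=
  mcf_holder_in_time_general n u (.of_contDiffOn hu_smooth hu_eq) M hM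
    (fun x t ht => hgrad x t ht.le) x₀ t₁ t₂ ht₁ ht₂ hneg
end
end
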